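/- The reduced integral homology of the dominance complex D(P_n × P_3) is as follows. (1) For n = 6m (m ≥ 1): H̃_i ≅ Z^2 if i = 10m−1, Z^6 if 9m−1 < i < 10m−1, Z^5 if i = 9m−1, and 0 otherwise. (2) For n = 6m+1: H̃_i ≅ Z^6 if 9m < i ≤ 10m, Z if i = 9m, and 0 otherwise. (3) For n = 6m+2 with m ≥ 1: H̃_i ≅ Z^4 if i = 10m+2, Z^6 if 9m+2 < i < 10m+2, Z^5 if i = 9m+2, and 0 otherwise; for n = 2: H̃_i ≅ Z^3 if i = 2 and 0 otherwise. (4) For n = 6m+3: H̃_i ≅ Z^2 if i = 10m+4, Z^6 if 9m+3 < i < 10m+4, Z if i = 9m+3, and 0 otherwise. (5) For n = 6m+4: H̃_i ≅ Z^6 if 9m+5 < i ≤ 10m+5, Z^5 if i = 9m+5, and 0 otherwise. (6) For n = 6m+5: H̃_i ≅ Z^4 if i = 10m+7, Z^6 if 9m+6 < i < 10m+7, Z if i = 9m+6, and 0 otherwise. -/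

import Mathlib

open SimpleGraph

/-- An abstract simplicial complex on the underlying vertex set `V`. -/
structure Cplx (V : Type) where
  faces : Finset V → Prop
  down_closed : ∀ ⦃σ τ : Finset V⦄, σ ⊆ τ → faces τ → faces σ

/-- The dominance complex of a graph: the faces are the subsets of the vertex set
whose complement is a dominating set. -/
def domCpx {V : Type} [Fintype V] [DecidableEq V] (G : SimpleGraph V) : Cplx V where
  faces σ := ∀ v : V, ∃ w : V, w ∉ σ ∧ (w = v ∨ G.Adj w v)
  down_closed := by
    intro σ τ hst h v
    obtain ⟨w, hw, h2⟩ := h v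
    exact ⟨w, fun hc => hw (hst hc), h2⟩

section Homology

variable {V : Type} [DecidableEq V] (K : Cplx V) (R : Type) [CommRing R]

/-- The (possibly degenerate) ordered `n`-simplices of `K`. -/
def Smpx (n : ℕ) : Type := {f : Fin (n + 1) → V // K.faces (Finset.image f Finset.univ)}

/-- The `i`-th face of an ordered simplex. -/
def Smpx.face {n : ℕ} (f : Smpx K (n + 1)) (i : Fin (n + 2)) : Smpx K n :=
  ⟨f.1 ∘ Fin.succAbove i, by
    refine K.down_closed ?_ f.2
    intro x hx
    simp only [Finset.mem_image, Function.comp_apply] at hx ⊢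
    obtain ⟨j, _, hj⟩ := hx
    exact ⟨_, Finset.mem_univ _, hj⟩⟩

/-- The simplicial boundary operator on the free modules of chains. -/
noncomputable def bdry (n : ℕ) : (Smpx K (n + 1) →₀ R) →ₗ[R] (Smpx K n →₀ R) :=
  Finsupp.linearCombination R fun f =>
    ∑ i : Fin (n + 2), ((-1 : R) ^ (i : ℕ)) • Finsupp.single (Smpx.face K f i) (1 : R)

/-- The augmentation map, into the free module on the unique `(-1)`-simplex. -/
noncomputable def aug : (Smpx K 0 →₀ R) →ₗ[R] (Unit →₀ R) :=
  Finsupp.linearCombination R fun _ => Finsupp.single () (1 : R)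

/-- Cycles: the kernels of the boundary maps of the augmented chain complex. -/
noncomputable def cyc : (n : ℕ) → Submodule R (Smpx K n →₀ R)
  | 0 => LinearMap.ker (aug K R)
  | n + 1 => LinearMap.ker (bdry K R n)

/-- Boundaries, viewed inside the cycles. -/
noncomputable def bsub (n : ℕ) : Submodule R ↥(cyc K R n) :=
  Submodule.comap (cyc K R n).subtype (LinearMap.range (bdry K R n))

/-- The reduced simplicial homology of `K` with coefficients in `R`, defined via the
augmented chain complex of ordered simplices. -/
noncomputable def reducedHomology : ℤ → ModuleCat R
  | Int.ofNat n =>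
      ModuleCat.of R
        (@HasQuotient.Quotient ↥(cyc K R n) (Submodule R ↥(cyc K R n))
          (@Submodule.hasQuotient R ↥(cyc K R n) _ _ _) (bsub K R n))
  | Int.negSucc 0 => ModuleCat.of R ((Unit →₀ R) ⧸ LinearMap.range (aug K R))
  | Int.negSucc (_ + 1) => ModuleCat.of R PUnit

/-- The `R`-homological dimension of a simplicial complex:
the supremum of the degrees with nonvanishing reduced homology, in `ℤ ∪ {±∞}`. -/
noncomputable def hdim : EReal :=
  sSup {x : EReal | ∃ n : ℤ, x = ((n : ℝ) : EReal) ∧ Nontrivial (reducedHomology K R n)}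

/-- The `R`-homological connectivity of a simplicial complex:
the supremum of the `n` such that all reduced homology in degrees `≤ n` vanishes. -/
noncomputable def conn : EReal :=
  sSup {x : EReal | ∃ n : ℤ, x = ((n : ℝ) : EReal) ∧
    ∀ i : ℤ, i ≤ n → Subsingleton (reducedHomology K R i)}

end Homology

/-- The reduced integral homology of the dominance complex of `P_n × P_3`. -/
noncomputable abbrev Hdp (n : ℕ) (i : ℤ) : ModuleCat ℤ :=
  reducedHomology (domCpx ((pathGraph n).boxProd (pathGraph 3))) ℤ i

/-!
Faces of the dominance complex are the subsets of `A` whose complement in `A` still meets the closed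
neighbourhood of every vertex in `B`, where `A` and `B` consist of all vertices. For arbitrary `A`
and `B` these complexes are closed under the link and the deletion of a vertex `x ∈ A`, which remove
`x` from `A`, and in the case of the deletion also the neighbours of `x` from `B`. If the map from
the homology of the link to that of the deletion vanishes, then the Poincaré polynomial of the
complex is the sum of the other two, with a shift by one degree.

That the map vanishes is often clear because one side is acyclic or no degree is shared. Otherwise
it is seen by counting ranks: if, in an exact sequence of finitely generated free modules over a
domain, the rank of a term is the sum of the ranks of its two neighbours, then the map into the
earlier neighbour is zero. The sequence to which this applies belongs to a different complex, whose
Poincaré polynomial is already known and through which the map factors, such as the one where an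
added vertex is adjacent to a single element of `B`.

In the grid with three rows, removing vertices at the right end in this way leads to eight shapes of
the end, up to shortening the strip. This gives recursions in the number of columns for the Poincaré
polynomials of these shapes, and the Betti numbers are the coefficients of their solutions.
-/

namespace GridDominance

open Polynomial

section Chains

variable {R V : Type*} [CommRing R]

/-- Ordered chains on `V`; the index `k` is the number of vertices of a simplex, so it is the
dimension plus one. Degenerate simplices are kept. -/
abbrev Chain (R V : Type*) [CommRing R] (k : ℕ) : Type _ := (Fin k → V) →₀ R

variable (R) in
/-- The alternating sum of the faces of an ordered simplex. -/
noncomputable def faceSum {k : ℕ} (f : Fin (k + 1) → V) : Chain R V k :=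
  ∑ i : Fin (k + 1), ((-1 : R) ^ (i : ℕ)) • Finsupp.single (f ∘ i.succAbove) (1 : R)

/-- The boundary operator. -/
noncomputable def boundary (k : ℕ) : Chain R V (k + 1) →ₗ[R] Chain R V k :=
  Finsupp.linearCombination R (faceSum R)

/-- The cone operator, which prepends the vertex `x` to a simplex. -/
noncomputable def cone (x : V) (k : ℕ) : Chain R V k →ₗ[R] Chain R V (k + 1) :=
  Finsupp.lmapDomain R R (fun f => (Fin.cons x f : Fin (k + 1) → V))

variable (R V) in
/-- The kernel of the boundary operator on chains with `k` vertices. -/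
noncomputable def kerBoundary : (k : ℕ) → Submodule R (Chain R V k)
  | 0 => ⊤
  | k + 1 => LinearMap.ker (boundary k)

open Classical in
/-- The part of a chain supported on simplices through `x`. -/
noncomputable def through (x : V) (k : ℕ) : Chain R V k →ₗ[R] Chain R V k :=
  (Finsupp.supported R R {f : Fin k → V | x ∈ Set.range f}).subtype ∘ₗ
    Finsupp.restrictDom R R {f : Fin k → V | x ∈ Set.range f}

@[simp] lemma boundary_single {k : ℕ} (f : Fin (k + 1) → V) (a : R) :
    boundary k (Finsupp.single f a) = a • faceSum R f := by
  simp [boundary]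

@[simp] lemma cone_single (x : V) {k : ℕ} (f : Fin k → V) (a : R) :
    cone x k (Finsupp.single f a) = Finsupp.single (Fin.cons x f) a := by
  simp [cone]

lemma faceSum_cons_zero (x : V) (f : Fin 0 → V) :
    faceSum R (Fin.cons x f : Fin 1 → V) = Finsupp.single f 1 := by
  rw [faceSum, Fin.sum_univ_succ]
  simp [Subsingleton.elim _ f]

lemma faceSum_cons (x : V) {k : ℕ} (f : Fin (k + 1) → V) :
    faceSum R (Fin.cons x f : Fin (k + 2) → V) =
      Finsupp.single f 1 - cone x k (faceSum R f) := by
  rw [faceSum, Fin.sum_univ_succ, sub_eq_add_neg]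
  congr 1
  · simp only [Fin.val_zero, pow_zero, one_smul]
    congr 1
  · rw [faceSum, map_sum, ← Finset.sum_neg_distrib]
    refine Finset.sum_congr rfl fun i _ => ?_
    rw [map_smul, cone_single, ← neg_smul]
    congr 1
    · simp [pow_succ]
    · congr 1
      funext j
      refine Fin.cases ?_ (fun j => ?_) j
      · simp
      · simp [Fin.succ_succAbove_succ]

lemma boundary_cone_zero (x : V) (c : Chain R V 0) : boundary 0 (cone x 0 c) = c := by
  induction c using Finsupp.induction_linear with
  | zero => simp
  | add f g hf hg => simp [hf, hg]
  | single f a => simp [faceSum_cons_zero]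

lemma boundary_cone_succ (x : V) {k : ℕ} (c : Chain R V (k + 1)) :
    boundary (k + 1) (cone x (k + 1) c) = c - cone x k (boundary k c) := by
  induction c using Finsupp.induction_linear with
  | zero => simp
  | add f g hf hg => simp only [map_add, hf, hg]; abel
  | single f a => simp [faceSum_cons, smul_sub]

lemma boundary_boundary_succ {k : ℕ} (c : Chain R V (k + 2)) :
    boundary k (boundary (k + 1) c) = 0 := by
  induction k with
  | zero =>
    induction c using Finsupp.induction_linear with
    | zero => simp
    | add f g hf hg => simp [hf, hg]
    | single f a =>
      rw [← Fin.cons_self_tail f, boundary_single, faceSum_cons, map_smul, map_sub,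
        boundary_cone_zero]
      simp
  | succ k ih =>
    induction c using Finsupp.induction_linear with
    | zero => simp
    | add f g hf hg => simp [hf, hg]
    | single f a =>
      rw [← Fin.cons_self_tail f, boundary_single, faceSum_cons, map_smul, map_sub,
        boundary_cone_succ, ← one_smul R (faceSum R (Fin.tail f)), ← boundary_single, ih]
      simp

lemma boundary_mem_kerBoundary (k : ℕ) (c : Chain R V (k + 1)) :
    boundary k c ∈ kerBoundary R V k := by
  cases k with
  | zero => trivial
  | succ k => exact boundary_boundary_succ c

lemma boundary_cone_of_mem_kerBoundary (x : V) {k : ℕ} {c : Chain R V k}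
    (hc : c ∈ kerBoundary R V k) :
    boundary k (cone x k c) = c := by
  cases k with
  | zero => exact boundary_cone_zero x c
  | succ k =>
    have h : boundary k c = 0 := hc
    rw [boundary_cone_succ, h]
    simp

variable (R) in
/-- Chains of the simplicial complex `K`. A simplicial complex is encoded as a lower set of sets
of vertices; only its finite members matter. -/
noncomputable def chains (K : LowerSet (Set V)) (k : ℕ) : Submodule R (Chain R V k) :=
  Finsupp.supported R R {f | Set.range f ∈ K}

lemma mem_chains {K : LowerSet (Set V)} {k : ℕ} {c : Chain R V k} :
    c ∈ chains R K k ↔ ∀ f, c f ≠ 0 → Set.range f ∈ K := by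
  rw [chains, Finsupp.mem_supported]
  simp [Set.subset_def]

lemma single_mem_chains {K : LowerSet (Set V)} {k : ℕ} {f : Fin k → V} (hf : Set.range f ∈ K)
    (a : R) : Finsupp.single f a ∈ chains R K k :=
  Finsupp.single_mem_supported R a hf

lemma chains_mono {K L : LowerSet (Set V)} (h : K ≤ L) (k : ℕ) : chains R K k ≤ chains R L k :=
  Finsupp.supported_mono fun _ hf => h hf

lemma chains_le {K : LowerSet (Set V)} {k : ℕ} {S : Submodule R (Chain R V k)}
    (h : ∀ f : Fin k → V, Set.range f ∈ K → Finsupp.single f 1 ∈ S) : chains R K k ≤ S := by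
  rw [chains, Finsupp.supported_eq_span_single, Submodule.span_le]
  rintro _ ⟨f, hf, rfl⟩
  exact h f hf

lemma faceSum_mem_chains {K : LowerSet (Set V)} {k : ℕ} {f : Fin (k + 1) → V}
    (hf : Set.range f ∈ K) : faceSum R f ∈ chains R K k :=
  Submodule.sum_mem _ fun _ _ => Submodule.smul_mem _ _ <|
    single_mem_chains (K.lower (Set.range_comp_subset_range _ _) hf) _

lemma boundary_mem_chains {K : LowerSet (Set V)} {k : ℕ} {c : Chain R V (k + 1)}
    (hc : c ∈ chains R K (k + 1)) : boundary k c ∈ chains R K k := by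
  have : chains R K (k + 1) ≤ (chains R K k).comap (boundary k) := chains_le fun f hf => by
    simpa using faceSum_mem_chains hf
  exact this hc

lemma cone_mem_chains {K L : LowerSet (Set V)} {x : V} (h : ∀ s ∈ L, insert x s ∈ K) {k : ℕ}
    {c : Chain R V k} (hc : c ∈ chains R L k) : cone x k c ∈ chains R K (k + 1) := by
  have : chains R L k ≤ (chains R K (k + 1)).comap (cone x k) := chains_le fun f hf => by
    simpa using single_mem_chains (by rw [Fin.range_cons]; exact h _ hf) _
  exact this hc

variable (R) in
/-- Cycles of the simplicial complex `K`. -/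
noncomputable def cycles (K : LowerSet (Set V)) (k : ℕ) : Submodule R (Chain R V k) :=
  chains R K k ⊓ kerBoundary R V k

variable (R) in
/-- Boundaries of the simplicial complex `K`. -/
noncomputable def boundaries (K : LowerSet (Set V)) (k : ℕ) : Submodule R (Chain R V k) :=
  (chains R K (k + 1)).map (boundary k)

lemma cycles_mono {K L : LowerSet (Set V)} (h : K ≤ L) (k : ℕ) : cycles R K k ≤ cycles R L k :=
  inf_le_inf_right _ (chains_mono h k)

variable (R) in
/-- Reduced homology of `K`, realised as the image of the cycles in the chains modulo boundaries;
as for `Chain`, the index is the dimension plus one. -/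
abbrev Homol (K : LowerSet (Set V)) (k : ℕ) : Type _ :=
  (cycles R K k).map (boundaries R K k).mkQ

/-- The homology class of a cycle. -/
noncomputable def cls {K : LowerSet (Set V)} {k : ℕ} : cycles R K k →ₗ[R] Homol R K k :=
  (boundaries R K k).mkQ.submoduleMap (cycles R K k)

lemma cls_eq_zero {K : LowerSet (Set V)} {k : ℕ} {z : cycles R K k} :
    cls z = 0 ↔ ∃ c ∈ chains R K (k + 1), boundary k c = z :=
  Subtype.ext_iff.trans (Submodule.Quotient.mk_eq_zero _)

lemma cls_eq {K : LowerSet (Set V)} {k : ℕ} {z w : cycles R K k} :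
    cls z = cls w ↔ ∃ c ∈ chains R K (k + 1), boundary k c = z - w := by
  rw [← sub_eq_zero, ← map_sub]
  exact cls_eq_zero

lemma exists_cls_eq {K : LowerSet (Set V)} {k : ℕ} (a : Homol R K k) : ∃ z, cls z = a :=
  LinearMap.submoduleMap_surjective _ _ a

/-- The map on homology induced by a linear map of chains. -/
noncomputable def homMap {K L : LowerSet (Set V)} {k l : ℕ} (φ : Chain R V k →ₗ[R] Chain R V l)
    (hZ : ∀ z ∈ cycles R K k, φ z ∈ cycles R L l)
    (hB : ∀ c ∈ chains R K (k + 1), φ (boundary k c) ∈ boundaries R L l) :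
    Homol R K k →ₗ[R] Homol R L l :=
  (Submodule.mapQ (boundaries R K k) (boundaries R L l) φ
    (Submodule.map_le_iff_le_comap.2 hB)).restrict <| by
      rintro _ ⟨z, hz, rfl⟩
      exact ⟨φ z, hZ z hz, rfl⟩

variable (R) in
/-- The map on homology induced by an inclusion of complexes. -/
noncomputable def incl {K L : LowerSet (Set V)} (h : K ≤ L) (k : ℕ) :
    Homol R K k →ₗ[R] Homol R L k :=
  homMap LinearMap.id (fun _ hz => cycles_mono h k hz)
    (fun c hc => ⟨c, chains_mono h _ hc, rfl⟩)

lemma incl_cls {K L : LowerSet (Set V)} (h : K ≤ L) {k : ℕ} (z : cycles R K k) :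
    incl R h k (cls z) = cls ⟨z, cycles_mono h k z.2⟩ := rfl

lemma incl_incl {K L M : LowerSet (Set V)} (h : K ≤ L) (h' : L ≤ M) {k : ℕ} (a : Homol R K k) :
    incl R h' k (incl R h k a) = incl R (h.trans h') k a := by
  obtain ⟨z, rfl⟩ := exists_cls_eq a
  rfl

/-- The link of `x` in `K`. -/
def link (K : LowerSet (Set V)) (x : V) : LowerSet (Set V) where
  carrier := {s | x ∉ s ∧ insert x s ∈ K}
  lower' _ _ hst h := ⟨fun hx => h.1 (hst hx), K.lower (Set.insert_subset_insert hst) h.2⟩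

/-- The deletion of `x` from `K`. -/
def del (K : LowerSet (Set V)) (x : V) : LowerSet (Set V) where
  carrier := {s | x ∉ s ∧ s ∈ K}
  lower' _ _ hst h := ⟨fun hx => h.1 (hst hx), K.lower hst h.2⟩

lemma mem_link {K : LowerSet (Set V)} {x : V} {s : Set V} :
    s ∈ link K x ↔ x ∉ s ∧ insert x s ∈ K := Iff.rfl

lemma mem_del {K : LowerSet (Set V)} {x : V} {s : Set V} :
    s ∈ del K x ↔ x ∉ s ∧ s ∈ K := Iff.rfl

lemma link_le_del (K : LowerSet (Set V)) (x : V) : link K x ≤ del K x :=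
  fun _ h => ⟨h.1, K.lower (Set.subset_insert _ _) h.2⟩

lemma del_le (K : LowerSet (Set V)) (x : V) : del K x ≤ K := fun _ h => h.2

lemma link_mono {K L : LowerSet (Set V)} (h : K ≤ L) (x : V) : link K x ≤ link L x :=
  fun _ hs => ⟨hs.1, h hs.2⟩

/-- The closed star of `x` in `K`. -/
def closedStar (K : LowerSet (Set V)) (x : V) : LowerSet (Set V) where
  carrier := {s | insert x s ∈ K}
  lower' _ _ hst h := K.lower (Set.insert_subset_insert hst) h

open Classical in
lemma through_apply (x : V) {k : ℕ} (c : Chain R V k) (f : Fin k → V) :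
    through x k c f = if x ∈ Set.range f then c f else 0 := by
  simp [through, Finsupp.restrictDom_apply, Finsupp.filter_apply]

lemma through_mem_closedStar {K : LowerSet (Set V)} (x : V) {k : ℕ} {c : Chain R V k}
    (hc : c ∈ chains R K k) : through x k c ∈ chains R (closedStar K x) k := by
  classical
  rw [mem_chains] at hc ⊢
  intro f hf
  rw [through_apply] at hf
  split_ifs at hf with hx
  · change insert x (Set.range f) ∈ K
    rw [Set.insert_eq_of_mem hx]
    exact hc f hf
  · exact absurd rfl hf

lemma sub_through_mem_del {K : LowerSet (Set V)} (x : V) {k : ℕ} {c : Chain R V k}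
    (hc : c ∈ chains R K k) : c - through x k c ∈ chains R (del K x) k := by
  classical
  rw [mem_chains] at hc ⊢
  intro f hf
  rw [Finsupp.sub_apply, through_apply] at hf
  split_ifs at hf with hx
  · simp at hf
  · exact ⟨hx, hc f (by simpa using hf)⟩

lemma through_eq_zero {K : LowerSet (Set V)} {x : V} {k : ℕ} {c : Chain R V k}
    (hc : c ∈ chains R (del K x) k) : through x k c = 0 := by
  classical
  rw [mem_chains] at hc
  ext f
  rw [through_apply]
  split_ifs with hx
  · by_contra h
    exact (hc f h).1 hx
  · rfl

lemma mem_chains_link {K : LowerSet (Set V)} {x : V} {k : ℕ} {c : Chain R V k}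
    (h₁ : c ∈ chains R (closedStar K x) k) (h₂ : c ∈ chains R (del K x) k) :
    c ∈ chains R (link K x) k := by
  rw [mem_chains] at *
  exact fun f hf => ⟨(h₂ f hf).1, h₁ f hf⟩

lemma through_cone (x : V) {k : ℕ} (c : Chain R V k) :
    through x (k + 1) (cone x k c) = cone x k c := by
  classical
  ext f
  rw [through_apply]
  split_ifs with hx
  · rfl
  · symm
    by_contra h
    have : f ∈ (cone x k c).support := Finsupp.mem_support_iff.2 h
    obtain ⟨g, -, rfl⟩ := Finset.mem_image.1 (Finsupp.mapDomain_support this)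
    exact hx ⟨0, rfl⟩

lemma boundary_through_mem_link {K : LowerSet (Set V)} (x : V) {k : ℕ} {z : Chain R V (k + 1)}
    (hz : z ∈ cycles R K (k + 1)) : boundary k (through x (k + 1) z) ∈ chains R (link K x) k := by
  refine mem_chains_link (boundary_mem_chains (through_mem_closedStar x hz.1)) ?_
  have h : boundary k z = 0 := hz.2
  have hdel := boundary_mem_chains (sub_through_mem_del x hz.1)
  rw [map_sub, h, zero_sub] at hdel
  simpa using neg_mem hdel

variable (R) in
/-- The connecting map of the long exact sequence of the link, the deletion and `K`. On cycles it
takes the part through `x` to its boundary. -/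
noncomputable def connecting (K : LowerSet (Set V)) (x : V) (k : ℕ) :
    Homol R K (k + 1) →ₗ[R] Homol R (link K x) k :=
  homMap (boundary k ∘ₗ through x (k + 1))
    (fun z hz => ⟨boundary_through_mem_link x hz, boundary_mem_kerBoundary _ _⟩)
    (fun c hc => by
      refine ⟨through x (k + 1) (boundary (k + 1) c) - boundary (k + 1) (through x (k + 2) c),
        ?_, ?_⟩
      · refine mem_chains_link ?_ ?_
        · exact sub_mem (through_mem_closedStar x (boundary_mem_chains hc))
            (boundary_mem_chains (through_mem_closedStar x hc))
        · have h := sub_through_mem_del x (boundary_mem_chains hc)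
          have h' := boundary_mem_chains (sub_through_mem_del x hc)
          rw [map_sub] at h'
          convert sub_mem h' h using 1
          abel
      · simp [boundary_boundary_succ])

lemma connecting_cls (K : LowerSet (Set V)) (x : V) {k : ℕ} (z : cycles R K (k + 1)) :
    connecting R K x k (cls z) =
      cls ⟨boundary k (through x (k + 1) z), boundary_through_mem_link x z.2,
        boundary_mem_kerBoundary _ _⟩ := rfl

lemma connecting_incl {K L : LowerSet (Set V)} (h : K ≤ L) (x : V) {k : ℕ} (a : Homol R K (k + 1)) :
    connecting R L x k (incl R h (k + 1) a) = incl R (link_mono h x) k (connecting R K x k a) := by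
  obtain ⟨z, rfl⟩ := exists_cls_eq a
  rfl

lemma exact_incl_link_incl_del (K : LowerSet (Set V)) (x : V) (k : ℕ) :
    Function.Exact (incl R (link_le_del K x) k) (incl R (del_le K x) k) := by
  intro a
  obtain ⟨z, rfl⟩ := exists_cls_eq a
  constructor
  · rw [incl_cls, cls_eq_zero]
    rintro ⟨c, hc, hz⟩
    have hz : boundary k c = z := hz
    have e : (z : Chain R V k) - boundary k (c - through x (k + 1) c) =
        boundary k (through x (k + 1) c) := by
      rw [map_sub, hz]; abel
    refine ⟨cls ⟨boundary k (through x (k + 1) c), ?_, boundary_mem_kerBoundary _ _⟩, ?_⟩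
    · refine mem_chains_link (boundary_mem_chains (through_mem_closedStar x hc)) ?_
      rw [← e]
      exact sub_mem z.2.1 (boundary_mem_chains (sub_through_mem_del x hc))
    · rw [incl_cls, cls_eq]
      refine ⟨-(c - through x (k + 1) c), neg_mem (sub_through_mem_del x hc), ?_⟩
      rw [map_neg]
      simp only [← e]
      abel
  · rintro ⟨b, hb⟩
    obtain ⟨w, rfl⟩ := exists_cls_eq b
    rw [← hb, incl_incl, incl_cls, cls_eq_zero]
    exact ⟨cone x k w, cone_mem_chains (L := link K x) (fun _ hs => hs.2) w.2.1,
      boundary_cone_of_mem_kerBoundary x w.2.2⟩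

lemma exact_incl_del_connecting (K : LowerSet (Set V)) (x : V) (k : ℕ) :
    Function.Exact (incl R (del_le K x) (k + 1)) (connecting R K x k) := by
  intro a
  obtain ⟨z, rfl⟩ := exists_cls_eq a
  constructor
  · rw [connecting_cls, cls_eq_zero]
    rintro ⟨u, hu, hz⟩
    have hz : boundary k u = boundary k (through x (k + 1) z) := hz
    set t := through x (k + 1) (z : Chain R V (k + 1))
    have hdz : boundary k (z : Chain R V (k + 1)) = 0 := z.2.2
    have hK : boundary k ((z : Chain R V (k + 1)) - t + u) = 0 := by
      rw [map_add, map_sub, hdz, hz]; abel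
    refine ⟨cls ⟨z - t + u, add_mem (sub_through_mem_del x z.2.1)
      (chains_mono (link_le_del K x) _ hu), hK⟩, ?_⟩
    rw [incl_cls, cls_eq]
    refine ⟨cone x (k + 1) (u - t), cone_mem_chains (L := closedStar K x) (fun s hs => hs)
      (sub_mem (chains_mono (K := link K x) (fun s hs => hs.2) _ hu)
        (through_mem_closedStar x z.2.1)), ?_⟩
    rw [boundary_cone_succ, map_sub, hz]
    simp only [sub_self, map_zero, sub_zero]
    abel
  · rintro ⟨b, hb⟩
    obtain ⟨w, rfl⟩ := exists_cls_eq b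
    rw [← hb, incl_cls, connecting_cls, cls_eq_zero]
    exact ⟨0, zero_mem _, by simp [through_eq_zero w.2.1]⟩

lemma exact_connecting_incl_link (K : LowerSet (Set V)) (x : V) (k : ℕ) :
    Function.Exact (connecting R K x k) (incl R (link_le_del K x) k) := by
  intro a
  obtain ⟨z, rfl⟩ := exists_cls_eq a
  constructor
  · rw [incl_cls, cls_eq_zero]
    rintro ⟨c, hc, hz⟩
    have hz : boundary k c = z := hz
    have hcone := boundary_cone_of_mem_kerBoundary x z.2.2
    refine ⟨cls ⟨cone x k z - c, sub_mem
      (cone_mem_chains (L := link K x) (fun _ hs => hs.2) z.2.1)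
      (chains_mono (del_le K x) _ hc), ?_⟩, ?_⟩
    · change boundary k _ = 0
      rw [map_sub, hcone, hz, sub_self]
    · rw [connecting_cls]
      congr 1
      ext1
      simp only [map_sub, through_cone, through_eq_zero hc, hcone, sub_zero]
  · rintro ⟨b, hb⟩
    obtain ⟨w, rfl⟩ := exists_cls_eq b
    have hdw : boundary k (w : Chain R V (k + 1)) = 0 := w.2.2
    rw [← hb, connecting_cls, incl_cls, cls_eq_zero]
    refine ⟨-(w.1 - through x (k + 1) w.1), neg_mem (sub_through_mem_del x w.2.1), ?_⟩
    rw [map_neg, map_sub, hdw]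
    simp

lemma incl_del_zero_surjective (K : LowerSet (Set V)) (x : V) :
    Function.Surjective (incl R (del_le K x) 0) := by
  intro a
  obtain ⟨z, rfl⟩ := exists_cls_eq a
  refine ⟨cls ⟨z, ?_, z.2.2⟩, rfl⟩
  have h := mem_chains.1 z.2.1
  refine mem_chains.2 fun f hf => ⟨?_, h f hf⟩
  rintro ⟨i, -⟩
  exact i.elim0

end Chains

section PoincarePolynomial

variable {R V : Type*} [CommRing R]

lemma free_of_exact {A B C : Type*} [AddCommGroup A] [AddCommGroup B] [AddCommGroup C]
    [Module R A] [Module R B] [Module R C] [StrongRankCondition R]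
    [Module.Free R A] [Module.Finite R A] [Module.Free R C] [Module.Finite R C]
    {f : A →ₗ[R] B} {g : B →ₗ[R] C} (hfg : Function.Exact f g) (hf : Function.Injective f)
    (hg : Function.Surjective g) :
    Module.Free R B ∧ Module.Finite R B ∧
      Module.finrank R B = Module.finrank R A + Module.finrank R C := by
  obtain ⟨s, hs⟩ := Module.projective_lifting_property g LinearMap.id hg
  let e := (hfg.splitSurjectiveEquiv hf ⟨s, hs⟩).1
  exact ⟨Module.Free.of_equiv e.symm, Module.Finite.equiv e.symm, by
    rw [e.finrank_eq, Module.finrank_prod]⟩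

lemma eq_zero_of_finrank_eq_add [IsDomain R] {A B C D : Type*} [AddCommGroup A] [AddCommGroup B]
    [AddCommGroup C] [AddCommGroup D] [Module R A] [Module R B] [Module R C] [Module R D]
    [Module.IsTorsionFree R B] [Module.Finite R B] [Module.Finite R C] [Module.Finite R D]
    {u : A →ₗ[R] B} {v : B →ₗ[R] C} {w : C →ₗ[R] D} (huv : Function.Exact u v)
    (hvw : Function.Exact v w)
    (h : Module.finrank R C = Module.finrank R B + Module.finrank R D) : u = 0 := by
  have hv := v.quotKerEquivRange.finrank_eq
  have hw := w.quotKerEquivRange.finrank_eq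
  have hB := Submodule.finrank_quotient_add_finrank (LinearMap.ker v)
  have hC := Submodule.finrank_quotient_add_finrank (LinearMap.ker w)
  have hD : Module.finrank R (LinearMap.range w) ≤ Module.finrank R D := Submodule.finrank_le _
  rw [hvw.linearMap_ker_eq] at hw hC
  rw [huv.linearMap_ker_eq] at hv hB
  have hu : Module.finrank R (LinearMap.range u) = 0 := by omega
  rw [← LinearMap.range_eq_bot, ← Submodule.rank_eq_zero (R := R)]
  have hlt : Module.rank R (LinearMap.range u) < Cardinal.aleph0 :=
    (Submodule.rank_le _).trans_lt (Module.rank_lt_aleph0 R B)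
  exact (Cardinal.toNat_eq_zero.1 hu).resolve_right hlt.not_ge

variable (R) in
/-- The homology of `K` is free of finite rank, with Poincaré polynomial `p`. As the index of
`Homol` is the dimension plus one, so is the exponent in `p`. -/
def HasPoly (K : LowerSet (Set V)) (p : ℕ[X]) : Prop :=
  ∀ k, Module.Free R (Homol R K k) ∧ Module.Finite R (Homol R K k) ∧
    Module.finrank R (Homol R K k) = p.coeff k

lemma chains_succ_eq_bot {K : LowerSet (Set V)} (h : ∀ s ∈ K, s = ∅) (k : ℕ) :
    chains R K (k + 1) = ⊥ := by
  refine le_antisymm (chains_le fun f hf => ?_) bot_le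
  exact absurd (Set.mem_range_self (f := f) 0) (by simp [h _ hf])

section Split

variable [Nontrivial R] {K L D : LowerSet (Set V)} {x : V} {a c p q : ℕ[X]}

lemma HasPoly.subsingleton (h : HasPoly R K p) {k : ℕ}
    (hk : p.coeff k = 0) : Subsingleton (Homol R K k) := by
  obtain ⟨_, _, hrank⟩ := h k
  rw [hk] at hrank
  exact (Module.finBasisOfFinrankEq R _ hrank).equivFun.toEquiv.subsingleton

lemma hasPoly_zero (h : ∀ k, Subsingleton (Homol R K k)) :
    HasPoly R K 0 := fun k => by
  have := h k
  exact ⟨inferInstance, inferInstance, by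
    rw [Module.finrank_zero_of_subsingleton, coeff_zero]⟩

lemma hasPoly_zero_of_cone (h : ∀ s ∈ K, insert x s ∈ K) :
    HasPoly R K 0 :=
  hasPoly_zero fun k => subsingleton_of_forall_eq 0 fun a => by
    obtain ⟨z, rfl⟩ := exists_cls_eq a
    exact cls_eq_zero.2 ⟨cone x k z, cone_mem_chains h z.2.1,
      boundary_cone_of_mem_kerBoundary x z.2.2⟩

lemma hasPoly_one (h : ∀ s, s ∈ K ↔ s = ∅) : HasPoly R K 1 := by
  have hchains := chains_succ_eq_bot (R := R) fun s => (h s).1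
  intro k
  cases k with
  | zero =>
    have hcycles : cycles R K 0 = ⊤ :=
      eq_top_iff.2 fun c _ => ⟨mem_chains.2 fun f _ => (h _).2 (Set.range_eq_empty f), trivial⟩
    have hinj : Function.Injective (cls (R := R) (K := K) (k := 0)) := by
      refine (injective_iff_map_eq_zero _).2 fun z hz => ?_
      obtain ⟨c, hc, hcz⟩ := cls_eq_zero.1 hz
      rw [hchains, Submodule.mem_bot] at hc
      exact Subtype.ext (by rw [← hcz, hc, map_zero, ZeroMemClass.coe_zero])
    let e : R ≃ₗ[R] Homol R K 0 :=
      (Finsupp.uniqueLinearEquiv R R (default : Fin 0 → V)).symm.trans <|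
        (LinearEquiv.ofTop _ hcycles).symm.trans <|
        LinearEquiv.ofBijective cls ⟨hinj, exists_cls_eq⟩
    exact ⟨Module.Free.of_equiv e, Module.Finite.equiv e, by
      rw [← e.finrank_eq, Module.finrank_self, coeff_one_zero]⟩
  | succ k =>
    have : Subsingleton (Homol R K (k + 1)) := subsingleton_of_forall_eq 0 fun a => by
      obtain ⟨z, rfl⟩ := exists_cls_eq a
      have hz : (z : Chain R V (k + 1)) ∈ chains R K (k + 1) := z.2.1
      rw [hchains, Submodule.mem_bot] at hz
      exact cls_eq_zero.2 ⟨0, zero_mem _, by rw [hz, map_zero]⟩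
    exact ⟨inferInstance, inferInstance, by
      simp [coeff_one, Module.finrank_zero_of_subsingleton]⟩

lemma link_le_del_of_eq (hL : link K x = L) (hD : del K x = D) : L ≤ D :=
  hL ▸ hD ▸ link_le_del K x

lemma del_le_of_eq (hD : del K x = D) : D ≤ K := hD ▸ del_le K x

lemma HasPoly.of_incl_link_eq_zero (hL : link K x = L) (hD : del K x = D) (ha : HasPoly R L a)
    (hc : HasPoly R D c) (h₀ : ∀ k, incl R (link_le_del_of_eq hL hD) k = 0) :
    HasPoly R K (c + X * a) := by
  subst hL hD
  have hinj : ∀ k, Function.Injective (incl R (del_le K x) k) := fun k => by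
    rw [← LinearMap.ker_eq_bot, (exact_incl_link_incl_del K x k).linearMap_ker_eq,
      LinearMap.range_eq_bot]
    exact h₀ k
  intro k
  obtain ⟨_, _, hk⟩ := hc k
  cases k with
  | zero =>
    let e := LinearEquiv.ofBijective _ ⟨hinj 0, incl_del_zero_surjective K x⟩
    refine ⟨Module.Free.of_equiv e, Module.Finite.equiv e, ?_⟩
    rw [← e.finrank_eq, hk]
    simp
  | succ k =>
    obtain ⟨_, _, hk'⟩ := ha k
    have hsurj : Function.Surjective (connecting R K x k) := by
      rw [← LinearMap.range_eq_top, ← (exact_connecting_incl_link K x k).linearMap_ker_eq,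
        LinearMap.ker_eq_top]
      exact h₀ k
    have h := free_of_exact (exact_incl_del_connecting K x k) (hinj (k + 1)) hsurj
    rw [hk, hk'] at h
    simpa using h

lemma incl_eq_zero_of_disjoint (h : L ≤ D) (ha : HasPoly R L a) (hc : HasPoly R D c) {k : ℕ}
    (hk : a.coeff k = 0 ∨ c.coeff k = 0) : incl R h k = 0 := by
  rcases hk with hk | hk
  · have := ha.subsingleton hk
    exact LinearMap.ext fun y => by rw [Subsingleton.elim y 0, map_zero, map_zero]
  · have := hc.subsingleton hk
    exact LinearMap.ext fun _ => Subsingleton.elim _ _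

lemma HasPoly.of_disjoint (hL : link K x = L) (hD : del K x = D) (ha : HasPoly R L a)
    (hc : HasPoly R D c) (h : ∀ k, a.coeff k = 0 ∨ c.coeff k = 0) : HasPoly R K (c + X * a) :=
  .of_incl_link_eq_zero hL hD ha hc fun k => incl_eq_zero_of_disjoint _ ha hc (h k)

lemma HasPoly.of_link (hL : link K x = L) (hD : del K x = D) (hc : HasPoly R D 0)
    (ha : HasPoly R L a) : HasPoly R K (X * a) := by
  simpa using HasPoly.of_disjoint hL hD ha hc fun k => .inr (coeff_zero k)

lemma HasPoly.of_del (hL : link K x = L) (hD : del K x = D) (ha : HasPoly R L 0)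
    (hc : HasPoly R D c) : HasPoly R K c := by
  simpa using HasPoly.of_disjoint hL hD ha hc fun k => .inl (coeff_zero k)

lemma HasPoly.link_of_incl_eq_zero (hL : link K x = L) (hD : del K x = D) (hp : HasPoly R D p)
    (hK : HasPoly R K (X * q)) (h₀ : ∀ k, incl R (del_le_of_eq hD) k = 0) :
    HasPoly R L (q + p) := by
  subst hL hD
  intro k
  obtain ⟨_, _, hrankD⟩ := hp k
  obtain ⟨_, _, hrankK⟩ := hK (k + 1)
  have hinj : Function.Injective (connecting R K x k) := by
    rw [← LinearMap.ker_eq_bot, (exact_incl_del_connecting K x k).linearMap_ker_eq,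
      LinearMap.range_eq_bot]
    exact h₀ (k + 1)
  have hsurj : Function.Surjective (incl R (link_le_del K x) k) := by
    rw [← LinearMap.range_eq_top, ← (exact_incl_link_incl_del K x k).linearMap_ker_eq,
      LinearMap.ker_eq_top]
    exact h₀ k
  have h := free_of_exact (exact_connecting_incl_link K x k) hinj hsurj
  rw [hrankD, hrankK] at h
  simpa using h

lemma incl_eq_zero_of_connecting {P : LowerSet (Set V)} (h : P ≤ K) (hD : HasPoly R (del K x) 0)
    (hK : HasPoly R K (X * q)) (h₀ : ∀ k, connecting R P x k = 0) (k : ℕ) :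
    incl R h k = 0 := by
  refine LinearMap.ext fun y => ?_
  cases k with
  | zero =>
    have := hK.subsingleton (k := 0) (by simp)
    exact Subsingleton.elim _ _
  | succ k =>
    have hy : connecting R K x k (incl R h (k + 1) y) = 0 := by
      rw [connecting_incl h x y, h₀ k, LinearMap.zero_apply, map_zero]
    obtain ⟨w, hw⟩ := (exact_incl_del_connecting K x k _).1 hy
    have := hD.subsingleton (k := k + 1) rfl
    rw [← hw, Subsingleton.elim w 0, map_zero, LinearMap.zero_apply]

end Split

section RankCount

variable [IsDomain R] {K L D : LowerSet (Set V)} {x : V} {a c p : ℕ[X]}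

lemma incl_link_eq_zero (hL : link K x = L) (hD : del K x = D) (ha : HasPoly R L a)
    (hc : HasPoly R D c) (hK : HasPoly R K (c + X * a)) (k : ℕ) :
    incl R (link_le_del_of_eq hL hD) k = 0 := by
  subst hL hD
  obtain ⟨_, _, hrankD⟩ := hc k
  obtain ⟨_, _, hrankK⟩ := hK k
  cases k with
  | zero =>
    refine eq_zero_of_finrank_eq_add (D := PUnit) (w := 0) (exact_incl_link_incl_del K x 0) ?_ ?_
    · intro y
      simpa using incl_del_zero_surjective K x y
    · rw [hrankD, hrankK, Module.finrank_zero_of_subsingleton]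
      simp
  | succ k =>
    obtain ⟨_, _, hrankL⟩ := ha k
    refine eq_zero_of_finrank_eq_add (exact_incl_link_incl_del K x _)
      (exact_incl_del_connecting K x k) ?_
    rw [hrankD, hrankK, hrankL]
    simp

lemma connecting_eq_zero (hL : link K x = L) (hD : del K x = D) (ha : HasPoly R L a)
    (hK : HasPoly R K p) (hc : HasPoly R D (a + p)) (k : ℕ) : connecting R K x k = 0 := by
  subst hL hD
  obtain ⟨_, _, hrankL⟩ := ha k
  obtain ⟨_, _, hrankD⟩ := hc k
  obtain ⟨_, _, hrankK⟩ := hK k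
  refine eq_zero_of_finrank_eq_add (exact_connecting_incl_link K x k)
    (exact_incl_link_incl_del K x k) ?_
  rw [hrankL, hrankD, hrankK, coeff_add]

end RankCount

end PoincarePolynomial

section Cover

variable {R V : Type*} [CommRing R]

/-- The complex of all subsets `s` of `A` whose complement `A \ s` covers `B`, in the sense that
every element of `B` is related to some element of `A \ s`. The dominance complex of a graph is
the case of closed adjacency, with `A` and `B` the set of all vertices. -/
def cover (r : V → V → Prop) (A B : Set V) : LowerSet (Set V) where
  carrier := {s | s ⊆ A ∧ ∀ y ∈ B, ∃ x ∈ A, r x y ∧ x ∉ s}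
  lower' _ _ hst h := ⟨hst.trans h.1, fun y hy =>
    let ⟨x, hx, hxy, hxs⟩ := h.2 y hy
    ⟨x, hx, hxy, fun hc => hxs (hst hc)⟩⟩

/-- The relation `r` with the elements related to `o` replaced by `y` alone. Adding a new element
`o` to `A` realises both `cover r A B` and `cover r A (B \ {y})` as link and deletion of `o` in one
complex. -/
def pendant (r : V → V → Prop) (o y : V) (x z : V) : Prop :=
  (x = o ∧ z = y) ∨ (x ≠ o ∧ r x z)

variable {r : V → V → Prop} {A B B' : Set V} {o x y z : V} {a c m p q t : ℕ[X]} {n : ℕ}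
  {S : Finset V}

lemma mem_cover {s : Set V} :
    s ∈ cover r A B ↔ s ⊆ A ∧ ∀ y ∈ B, ∃ x ∈ A, r x y ∧ x ∉ s := Iff.rfl

lemma cover_anti (A : Set V) (h : B' ⊆ B) : cover r A B ≤ cover r A B' :=
  fun _ hs => ⟨hs.1, fun y hy => hs.2 y (h hy)⟩

lemma link_cover (hx : x ∈ A) (B : Set V) : link (cover r A B) x = cover r (A \ {x}) B := by
  ext s
  simp only [SetLike.mem_coe, mem_link, mem_cover, Set.mem_sdiff, Set.mem_singleton_iff,
    Set.mem_insert_iff, Set.insert_subset_iff, Set.subset_sdiff, Set.disjoint_singleton_right, hx]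
  grind

lemma del_cover (hx : x ∈ A) (B : Set V) :
    del (cover r A B) x = cover r (A \ {x}) (B \ {y | r x y}) := by
  ext s
  simp only [SetLike.mem_coe, mem_del, mem_cover, Set.mem_sdiff, Set.mem_singleton_iff,
    Set.subset_sdiff, Set.disjoint_singleton_right, Set.mem_ofPred_eq]
  grind

lemma cover_sdiff_singleton_of_dominated (hz : z ∈ B) (hzy : z ≠ y)
    (h : ∀ x ∈ A, r x z → r x y) : cover r A (B \ {y}) = cover r A B := by
  refine le_antisymm (fun s hs => ⟨hs.1, fun w hw => ?_⟩) (cover_anti A Set.sdiff_subset)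
  by_cases hwy : w = y
  · obtain ⟨x, hx, hxz, hxs⟩ := hs.2 z ⟨hz, hzy⟩
    exact ⟨x, hx, hwy ▸ h x hx hxz, hxs⟩
  · exact hs.2 w ⟨hw, hwy⟩

lemma cover_pendant (ho : o ∉ A) (B : Set V) : cover (pendant r o y) A B = cover r A B := by
  ext s
  simp only [SetLike.mem_coe, mem_cover, pendant]
  grind

lemma link_pendant (ho : o ∉ A) (B : Set V) :
    link (cover (pendant r o y) (insert o A) B) o = cover r A B := by
  rw [link_cover (Set.mem_insert o A), Set.insert_sdiff_self_of_notMem ho, cover_pendant ho]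

lemma del_pendant (ho : o ∉ A) (B : Set V) :
    del (cover (pendant r o y) (insert o A) B) o = cover r A (B \ {y}) := by
  rw [del_cover (Set.mem_insert o A), Set.insert_sdiff_self_of_notMem ho, cover_pendant ho]
  congr 2
  ext z
  simp [pendant]

section Nontrivial

variable [Nontrivial R]

lemma hasPoly_cover_empty : HasPoly R (cover r (∅ : Set V) ∅) 1 :=
  hasPoly_one fun s => by simp [mem_cover]

lemma hasPoly_cover_of_isolated_left (hx : x ∈ A) (h : ∀ y ∈ B, ¬ r x y) :
    HasPoly R (cover r A B) 0 := by
  refine hasPoly_zero_of_cone (x := x) fun s hs => ⟨Set.insert_subset hx hs.1, fun y hy => ?_⟩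
  obtain ⟨w, hw, hwy, hws⟩ := hs.2 y hy
  exact ⟨w, hw, hwy, fun hc => hc.elim (fun e => h y hy (e ▸ hwy)) hws⟩

lemma hasPoly_cover_of_isolated_right (hy : y ∈ B) (h : ∀ x ∈ A, ¬ r x y) :
    HasPoly R (cover r A B) 0 :=
  hasPoly_zero_of_cone (x := y) fun s hs => by
    obtain ⟨w, hw, hwy, -⟩ := hs.2 y hy
    exact absurd hwy (h w hw)

lemma hasPoly_cover_of_unique_neighbor (hx : x ∈ A) (hy : y ∈ B) (h : ∀ w ∈ A, r w y → w = x)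
    (hp : HasPoly R (cover r (A \ {x}) (B \ {z | r x z})) p) : HasPoly R (cover r A B) p :=
  .of_del (link_cover hx B) (del_cover hx B)
    (hasPoly_cover_of_isolated_right hy fun w hw hwy => hw.2 (h w hw.1 hwy)) hp

lemma hasPoly_cover_of_dominated_left (hx : x ∈ A) (hz : z ∈ A) (hzx : z ≠ x)
    (h : ∀ y ∈ B, r z y → r x y) (hp : HasPoly R (cover r (A \ {x}) B) p) :
    HasPoly R (cover r A B) (X * p) :=
  .of_link (link_cover hx B) (del_cover hx B)
    (hasPoly_cover_of_isolated_left ⟨hz, hzx⟩ fun y hy hzy => hy.2 (h y hy.1 hzy)) hp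

lemma hasPoly_cover_of_disjoint_left (hx : x ∈ A) (ha : HasPoly R (cover r (A \ {x}) B) a)
    (hc : HasPoly R (cover r (A \ {x}) (B \ {y | r x y})) c)
    (h : ∀ k, a.coeff k = 0 ∨ c.coeff k = 0) : HasPoly R (cover r A B) (c + X * a) :=
  .of_disjoint (link_cover hx B) (del_cover hx B) ha hc h

lemma hasPoly_del_pendant (ho : o ∉ A) (hx : x ∈ A) (hxy : r x y) :
    HasPoly R (del (cover (pendant r o y) (insert o A) B) x) 0 := by
  have hxo : x ≠ o := fun e => ho (e ▸ hx)
  rw [del_cover (Set.mem_insert_of_mem o hx)]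
  refine hasPoly_cover_of_isolated_left (x := o) ⟨Set.mem_insert o A, hxo.symm⟩ fun z hz hoz => ?_
  have hzy : z = y := by simpa [pendant] using hoz
  subst hzy
  exact hz.2 (Or.inr ⟨hxo, hxy⟩)

lemma hasPoly_pendant (ho : o ∉ A) (hy : y ∈ B) (hS : ∀ x, x ∈ S ↔ x ∈ A ∧ r x y)
    (ht : HasPoly R (cover r (A \ {x | r x y}) (B \ {y})) t) :
    HasPoly R (cover (pendant r o y) (insert o A) B) (X ^ S.card * t) := by
  classical
  induction S using Finset.induction_on generalizing A with
  | empty =>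
    have hA : ∀ x ∈ A, ¬ r x y := fun x hx hxy => by simpa using (hS x).2 ⟨hx, hxy⟩
    have hsdiff : A \ {x | r x y} = A := sdiff_eq_left.2 (Set.disjoint_left.2 hA)
    rw [hsdiff] at ht
    rw [Finset.card_empty, pow_zero, one_mul]
    exact .of_del (link_pendant ho B) (del_pendant ho B) (hasPoly_cover_of_isolated_right hy hA) ht
  | insert x S hxS ih =>
    obtain ⟨hx, hxy⟩ := (hS x).1 (Finset.mem_insert_self x S)
    have hox : o ≠ x := fun e => ho (e ▸ hx)
    rw [Finset.card_insert_of_notMem hxS, pow_succ', mul_assoc]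
    refine .of_link (x := x) (L := cover (pendant r o y) (insert o (A \ {x})) B) ?_ rfl
      (hasPoly_del_pendant ho hx hxy) (ih (fun h => ho h.1) ?_ ?_)
    · rw [link_cover (Set.mem_insert_of_mem o hx), Set.insert_sdiff_of_notMem]
      exact hox
    · intro z
      have := hS z
      simp only [Finset.mem_insert, Set.mem_sdiff, Set.mem_singleton_iff] at this ⊢
      grind
    · convert ht using 2
      ext z
      simp only [Set.mem_sdiff, Set.mem_singleton_iff, Set.mem_ofPred_eq]
      grind

lemma hasPoly_cover_of_disjoint_right (ho : o ∉ A) (hy : y ∈ B)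
    (hS : ∀ x, x ∈ S ↔ x ∈ A ∧ r x y) (hn : S.card = n + 1)
    (hp : HasPoly R (cover r A (B \ {y})) p)
    (hq : HasPoly R (cover r (A \ {x | r x y}) (B \ {y})) q)
    (h : ∀ k, p.coeff k = 0 ∨ (X ^ (n + 1) * q).coeff k = 0) :
    HasPoly R (cover r A B) (X ^ n * q + p) := by
  have hM := hasPoly_pendant ho hy hS hq
  rw [hn, pow_succ', mul_assoc] at hM
  rw [pow_succ', mul_assoc] at h
  exact .link_of_incl_eq_zero (link_pendant ho B) (del_pendant ho B) hp hM fun k =>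
    incl_eq_zero_of_disjoint _ hp hM (h k)

end Nontrivial

section RankCount

variable [IsDomain R]

/-- The zero map is certified on the smaller set `B'`, which still contains all elements of `B`
not related to `x`. -/
lemma hasPoly_cover_of_shrink (hx : x ∈ A) (hB : B' ⊆ B) (hB' : B \ {y | r x y} ⊆ B')
    (ha : HasPoly R (cover r (A \ {x}) B) a)
    (hc : HasPoly R (cover r (A \ {x}) (B \ {y | r x y})) c)
    (hm : HasPoly R (cover r (A \ {x}) B') m) (hK : HasPoly R (cover r A B') (c + X * m)) :
    HasPoly R (cover r A B) (c + X * a) := by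
  have hsdiff : B' \ {y | r x y} = B \ {y | r x y} :=
    Set.Subset.antisymm (Set.sdiff_subset_sdiff_left hB) fun z hz => ⟨hB' hz, hz.2⟩
  have hD := del_cover (r := r) hx B'
  rw [hsdiff] at hD
  refine .of_incl_link_eq_zero (link_cover hx B) (del_cover hx B) ha hc fun k =>
    LinearMap.ext fun z => ?_
  rw [← incl_incl (cover_anti _ hB) (link_le_del_of_eq (link_cover hx B') hD),
    incl_link_eq_zero (link_cover hx B') hD hm hc hK]
  rfl

/-- The zero map factors through the deletion of `o` in the pendant complex at a neighbour `y`
of `x`. -/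
lemma hasPoly_cover_split_left (ho : o ∉ A) (hx : x ∈ A) (hy : y ∈ B) (hxy : r x y)
    (hS : ∀ z, z ∈ S ↔ z ∈ A \ {x} ∧ r z y) (hp : HasPoly R (cover r (A \ {x}) B) p)
    (hq : HasPoly R (cover r (A \ {x}) (B \ {z | r x z})) q)
    (hm : HasPoly R (cover r (A \ {x}) (B \ {y})) m)
    (ht : HasPoly R (cover r ((A \ {x}) \ {z | r z y}) (B \ {y})) t)
    (h : X ^ S.card * t = m + X * p) : HasPoly R (cover r A B) (q + X * p) := by
  have ho' : o ∉ A \ {x} := fun h => ho h.1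
  have hM := hasPoly_pendant ho' hy hS ht
  rw [h] at hM
  refine .of_incl_link_eq_zero (link_cover hx B) (del_cover hx B) hp hq fun k =>
    LinearMap.ext fun z => ?_
  have hle : cover r (A \ {x}) (B \ {y}) ≤ cover r (A \ {x}) (B \ {z | r x z}) :=
    cover_anti _ fun w hw => ⟨hw.1, fun h => hw.2 (by rw [Set.mem_singleton_iff.1 h]; exact hxy)⟩
  rw [← incl_incl (link_le_del_of_eq (link_pendant ho' B) (del_pendant (r := r) ho' B)) hle,
    incl_link_eq_zero (link_pendant ho' B) (del_pendant ho' B) hp hm hM, LinearMap.zero_apply,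
    map_zero, LinearMap.zero_apply]

/-- The inclusion of the deletion of `o` in the pendant complex vanishes because every class of the
latter is detected by the connecting map at a neighbour `x` of `y`. -/
lemma hasPoly_cover_split_right (ho : o ∉ A) (hx : x ∈ A) (hy : y ∈ B) (hxy : r x y)
    (hS : ∀ z, z ∈ S ↔ z ∈ A ∧ r z y) (hn : S.card = n + 1)
    (hp : HasPoly R (cover r A (B \ {y})) p)
    (hq : HasPoly R (cover r (A \ {z | r z y}) (B \ {y})) q)
    (hm : HasPoly R (cover r (A \ {x}) (B \ {y})) m)
    (ht : HasPoly R (cover r (A \ {x}) ((B \ {y}) \ {z | r x z})) (m + p)) :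
    HasPoly R (cover r A B) (X ^ n * q + p) := by
  have hM := hasPoly_pendant ho hy hS hq
  rw [hn, pow_succ', mul_assoc] at hM
  exact .link_of_incl_eq_zero (link_pendant ho B) (del_pendant ho B) hp hM
    (incl_eq_zero_of_connecting _ (hasPoly_del_pendant ho hx hxy) hM
      (connecting_eq_zero (link_cover hx _) (del_cover hx _) hm hp ht))

end RankCount

end Cover

section Grid

variable {p a b i j k v w : ℕ}

/-- Closed adjacency in the grid with three rows, where the number `3 * c + r` stands for the
vertex in column `c` and row `r`. -/
def gridRel (x y : ℕ) : Prop :=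
  x = y ∨ x + 3 = y ∨ y + 3 = x ∨ (x / 3 = y / 3 ∧ (x + 1 = y ∨ y + 1 = x))

lemma gridRel_comm {x y : ℕ} : gridRel x y ↔ gridRel y x := by
  unfold gridRel
  omega

/-- All vertices in columns `1, …, p - 1`, together with the vertices `3 * p + i` for which the
`i`-th bit of `w` is set: the end of a long strip is described by a bit mask, counted from column
`p`. -/
def strip (p w : ℕ) : Set ℕ :=
  {v | (3 ≤ v ∧ v < 3 * p) ∨ (3 * p ≤ v ∧ w.testBit (v - 3 * p) = true)}

lemma mem_strip : v ∈ strip p w ↔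
    (3 ≤ v ∧ v < 3 * p) ∨ (3 * p ≤ v ∧ w.testBit (v - 3 * p) = true) := Iff.rfl

lemma add_mem_strip : 3 * p + i ∈ strip p w ↔ w.testBit i = true := by
  simp [mem_strip]

/-- The closed neighbourhood of `i` in the grid, as a bit mask. The constants encode the closed
neighbourhoods of `3`, `4` and `5`; for `i < 3` the truncated subtraction makes the mask
meaningless. -/
def nbMask (i : ℕ) : ℕ := (if i % 3 = 0 then 89 else if i % 3 = 1 then 93 else 77) <<< (i - 3)

/-- The bit mask `w` with the bits of `m` cleared, that is, the set difference. -/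
def clear (w m : ℕ) : ℕ := w ^^^ (w &&& m)

lemma testBit_clear (w m i : ℕ) : (clear w m).testBit i = (w.testBit i && !m.testBit i) := by
  rw [clear, Nat.testBit_xor, Nat.testBit_and]
  cases w.testBit i <;> cases m.testBit i <;> rfl

lemma testBit_nbMask (hi : 3 ≤ i) (j : ℕ) : (nbMask i).testBit j = true ↔ gridRel i j := by
  obtain ⟨i, rfl⟩ := Nat.exists_eq_add_of_le' hi
  rw [nbMask, Nat.testBit_shiftLeft, Nat.add_sub_cancel, gridRel]
  by_cases hj : j < i
  · simp only [ge_iff_le, hj.not_ge, decide_false, Bool.false_and, Bool.false_eq_true, false_iff]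
    omega
  obtain ⟨k, rfl⟩ := Nat.exists_eq_add_of_le (not_lt.1 hj)
  simp only [ge_iff_le, Nat.le_add_right, decide_true, Bool.true_and, Nat.add_sub_cancel_left]
  by_cases hk : k < 7
  · rw [Nat.add_mod_right]
    obtain h | h | h : i % 3 = 0 ∨ i % 3 = 1 ∨ i % 3 = 2 := by omega
    all_goals rw [h]; interval_cases k <;> norm_num [Nat.testBit] <;> omega
  · rw [Nat.testBit_lt_two_pow]
    · simp only [Bool.false_eq_true, false_iff]
      omega
    · calc _ < 2 ^ 7 := by split_ifs <;> norm_num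
        _ ≤ 2 ^ k := Nat.pow_le_pow_right (by norm_num) (not_lt.1 hk)

lemma strip_clear_bit (p w i : ℕ) : strip p (clear w (1 <<< i)) = strip p w \ {3 * p + i} := by
  ext v
  simp only [mem_strip, testBit_clear, Set.mem_sdiff, Set.mem_singleton_iff, Nat.one_shiftLeft,
    Nat.testBit_two_pow, Bool.and_eq_true, Bool.not_eq_true', decide_eq_false_iff_not]
  constructor
  · rintro (h | ⟨h, h₁, h₂⟩)
    · exact ⟨Or.inl h, by omega⟩
    · exact ⟨Or.inr ⟨h, h₁⟩, by omega⟩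
  · rintro ⟨h | ⟨h, h₁⟩, h₂⟩
    · exact Or.inl h
    · exact Or.inr ⟨h, h₁, by omega⟩

lemma strip_clear_two_bits (p w i j : ℕ) :
    strip p (clear w (1 <<< i ||| 1 <<< j)) = strip p w \ {3 * p + i, 3 * p + j} := by
  have e : clear w (1 <<< i ||| 1 <<< j) = clear (clear w (1 <<< i)) (1 <<< j) := by
    refine Nat.eq_of_testBit_eq fun k => ?_
    simp only [testBit_clear, Nat.testBit_or]
    cases w.testBit k <;> simp
  rw [e, strip_clear_bit, strip_clear_bit, Set.sdiff_sdiff]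
  rfl

lemma gridRel_add_left (h : 3 * p ≤ v) :
    gridRel (3 * p + i) v ↔ gridRel i (v - 3 * p) := by
  unfold gridRel
  omega

lemma gridRel_of_testBit_nbMask (hi : 3 ≤ i) (h : (nbMask i).testBit j = true) :
    gridRel (3 * p + i) (3 * p + j) := by
  rw [gridRel_add_left (by omega), Nat.add_sub_cancel_left]
  exact (testBit_nbMask hi j).1 h

lemma strip_clear_nbMask (p w : ℕ) (hi : 3 ≤ i) :
    strip p (clear w (nbMask i)) = strip p w \ {v | gridRel (3 * p + i) v} := by
  ext v
  simp only [mem_strip, testBit_clear, Set.mem_sdiff, Set.mem_ofPred_eq, Bool.and_eq_true,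
    Bool.not_eq_true']
  rcases lt_or_ge v (3 * p) with h | h
  · have : ¬ gridRel (3 * p + i) v := by unfold gridRel; omega
    simp [h, h.not_ge, this]
  · rw [gridRel_add_left h, ← testBit_nbMask hi]
    simp [h, h.not_gt]

lemma strip_clear_nbMask' (p w : ℕ) (hi : 3 ≤ i) :
    strip p (clear w (nbMask i)) = strip p w \ {v | gridRel v (3 * p + i)} := by
  simp_rw [strip_clear_nbMask p w hi, gridRel_comm]

lemma add_self_notMem_strip (p w : ℕ) : 3 * p + w ∉ strip p w := by
  rw [add_mem_strip, Nat.testBit_lt_two_pow Nat.lt_two_pow_self]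
  exact Bool.false_ne_true

lemma exists_testBit_of_gridRel (hj : 3 ≤ j) (hv : v ∈ strip p w) (h : gridRel v (3 * p + j)) :
    ∃ k, v = 3 * p + k ∧ w.testBit k = true ∧ (nbMask j).testBit k = true := by
  obtain ⟨k, rfl⟩ : ∃ k, v = 3 * p + k :=
    Nat.exists_eq_add_of_le (by unfold gridRel at h; omega)
  refine ⟨k, rfl, add_mem_strip.1 hv, (testBit_nbMask hj k).2 ?_⟩
  rw [gridRel_comm, gridRel_add_left (by omega)] at h
  simpa using h

lemma not_gridRel_of_and_eq_zero (hj : 3 ≤ j) (h : w &&& nbMask j = 0) (hv : v ∈ strip p w) :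
    ¬ gridRel v (3 * p + j) := fun hr => by
  obtain ⟨k, -, hw, hk⟩ := exists_testBit_of_gridRel hj hv hr
  simpa [hw, hk] using congrArg (Nat.testBit · k) h

lemma eq_of_and_eq_one_shiftLeft (hj : 3 ≤ j) (h : w &&& nbMask j = 1 <<< i)
    (hv : v ∈ strip p w) (hr : gridRel v (3 * p + j)) : v = 3 * p + i := by
  obtain ⟨k, rfl, hw, hk⟩ := exists_testBit_of_gridRel hj hv hr
  have hik := congrArg (Nat.testBit · k) h
  simp only [Nat.testBit_and, hw, hk, Nat.one_shiftLeft, Nat.testBit_two_pow, Bool.and_self,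
    true_eq_decide_iff] at hik
  rw [hik]

lemma gridRel_of_clear_eq_zero (hi : 3 ≤ i) (hj : 3 ≤ j)
    (h : clear (w &&& nbMask j) (nbMask i) = 0) (hv : v ∈ strip p w)
    (hr : gridRel v (3 * p + j)) : gridRel v (3 * p + i) := by
  obtain ⟨k, rfl, hw, hk⟩ := exists_testBit_of_gridRel hj hv hr
  have hik := congrArg (Nat.testBit · k) h
  simp only [testBit_clear, Nat.testBit_and, hw, hk, Bool.and_self, Bool.true_and,
    Nat.zero_testBit, Bool.not_eq_false', testBit_nbMask hi] at hik
  rw [gridRel_comm, gridRel_add_left (by omega)]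
  simpa using hik

/-- The set of bits of `w` in the closed neighbourhood of `i`. -/
def nbBits (w i : ℕ) : Finset ℕ :=
  (Finset.range (i + 4)).filter fun j => (w &&& nbMask i).testBit j = true

lemma mem_map_nbBits (p w : ℕ) (hi : 3 ≤ i) (v : ℕ) :
    v ∈ (nbBits w i).map (addLeftEmbedding (3 * p)) ↔
      v ∈ strip p w ∧ gridRel v (3 * p + i) := by
  simp only [Finset.mem_map, nbBits, Finset.mem_filter, Finset.mem_range, Nat.testBit_and,
    Bool.and_eq_true, addLeftEmbedding_apply]
  constructor
  · rintro ⟨j, ⟨-, hw, hj⟩, rfl⟩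
    rw [testBit_nbMask hi] at hj
    exact ⟨add_mem_strip.2 hw, by rw [gridRel_comm, gridRel_add_left (by omega)]; simpa using hj⟩
  · rintro ⟨hv, hr⟩
    obtain ⟨k, rfl, hw, hk⟩ := exists_testBit_of_gridRel hi hv hr
    refine ⟨k, ⟨?_, hw, hk⟩, rfl⟩
    unfold gridRel at hr
    omega

/-- The covering complex of the grid with `A = strip p a` and `B = strip p b`. -/
def gridCover (p a b : ℕ) : LowerSet (Set ℕ) := cover gridRel (strip p a) (strip p b)

/-- Prepend `j` full columns to a bit pattern. -/
def padBits : ℕ → ℕ → ℕ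
  | 0, w => w
  | j + 1, w => padBits j (8 * w + 7)

lemma testBit_eight_mul_add (w : ℕ) {r : ℕ} (hr : r < 8) (hi : 3 ≤ i) :
    (8 * w + r).testBit i = w.testBit (i - 3) := by
  obtain ⟨i, rfl⟩ := Nat.exists_eq_add_of_le' hi
  rw [Nat.add_sub_cancel, Nat.testBit_add, show (2 : ℕ) ^ 3 = 8 from rfl,
    Nat.mul_add_div (by norm_num), Nat.div_eq_of_lt hr, add_zero]

lemma strip_add_two (p w : ℕ) : strip (p + 2) w = strip (p + 1) (8 * w + 7) := by
  ext v
  rw [mem_strip, mem_strip]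
  rcases lt_or_ge v (3 * (p + 1)) with h | h
  · simp [h, h.not_ge, show v < 3 * (p + 2) by omega, show ¬ 3 * (p + 2) ≤ v by omega]
  obtain ⟨i, rfl⟩ := Nat.exists_eq_add_of_le h
  rw [Nat.add_sub_cancel_left]
  rcases lt_or_ge i 3 with hi | hi
  · have h₁ : (8 * w + 7).testBit i = true := by
      rw [show 8 * w + 7 = 2 ^ 3 * w + 7 by norm_num, Nat.testBit_two_pow_mul_add _ (by norm_num)]
      interval_cases i <;> rfl
    simp only [h₁, and_true]
    omega
  · rw [testBit_eight_mul_add w (by norm_num) hi,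
      show 3 * (p + 1) + i - 3 * (p + 2) = i - 3 by omega]
    grind

lemma strip_one (w : ℕ) : strip 1 w = strip 0 (8 * w) := by
  ext v
  rw [mem_strip, mem_strip]
  rcases lt_or_ge v 3 with h | h
  · have h₁ : (8 * w).testBit v = false := by
      rw [show 8 * w = 2 ^ 3 * w + 0 by norm_num, Nat.testBit_two_pow_mul_add _ (by norm_num)]
      simp [h]
    simp [h, h.not_ge, h₁]
  · have := testBit_eight_mul_add w (r := 0) (by norm_num) h
    rw [add_zero] at this
    simp [h, h.not_gt, this]

lemma gridCover_pad (p j a b : ℕ) :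
    gridCover (p + j + 1) a b = gridCover (p + 1) (padBits j a) (padBits j b) := by
  induction j generalizing a b with
  | zero => rfl
  | succ j ih =>
    rw [padBits, padBits, ← ih, gridCover, gridCover, ← add_assoc, strip_add_two, strip_add_two]

lemma gridCover_clear_of_dominated (hi : 3 ≤ i) (hj : 3 ≤ j) (hji : j ≠ i)
    (hb : b.testBit j = true) (h : clear (a &&& nbMask j) (nbMask i) = 0) :
    gridCover p a (clear b (1 <<< i)) = gridCover p a b := by
  rw [gridCover, strip_clear_bit]
  exact cover_sdiff_singleton_of_dominated (add_mem_strip.2 hb) (by simpa using hji)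
    fun _ => gridRel_of_clear_eq_zero hi hj h

variable {R : Type*} [CommRing R] {q q₁ q₂ q₃ q₄ : ℕ[X]}

section Nontrivial

variable [Nontrivial R]

lemma hasPoly_gridCover_zero : HasPoly R (gridCover 0 0 0) 1 := by
  have he : strip 0 0 = ∅ := by
    ext v
    simp [mem_strip]
  rw [gridCover, he]
  exact hasPoly_cover_empty

lemma hasPoly_gridCover_of_isolated_left (hi : 3 ≤ i) (ha : a.testBit i = true)
    (h : b &&& nbMask i = 0) : HasPoly R (gridCover p a b) 0 :=
  hasPoly_cover_of_isolated_left (add_mem_strip.2 ha) fun _ hy =>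
    gridRel_comm.not.1 (not_gridRel_of_and_eq_zero hi h hy)

lemma hasPoly_gridCover_of_isolated_right (hi : 3 ≤ i) (hb : b.testBit i = true)
    (h : a &&& nbMask i = 0) : HasPoly R (gridCover p a b) 0 :=
  hasPoly_cover_of_isolated_right (add_mem_strip.2 hb) fun _ =>
    not_gridRel_of_and_eq_zero hi h

lemma hasPoly_gridCover_of_unique_neighbor (hi : 3 ≤ i) (hj : 3 ≤ j) (ha : a.testBit i = true)
    (hb : b.testBit j = true) (h : a &&& nbMask j = 1 <<< i)
    (hq : HasPoly R (gridCover p (clear a (1 <<< i)) (clear b (nbMask i))) q) :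
    HasPoly R (gridCover p a b) q := by
  rw [gridCover, strip_clear_bit, strip_clear_nbMask p b hi] at hq
  exact hasPoly_cover_of_unique_neighbor (add_mem_strip.2 ha) (add_mem_strip.2 hb)
    (fun _ => eq_of_and_eq_one_shiftLeft hj h) hq

lemma hasPoly_gridCover_of_dominated_left (hi : 3 ≤ i) (hj : 3 ≤ j) (hji : j ≠ i)
    (hai : a.testBit i = true) (haj : a.testBit j = true)
    (h : clear (b &&& nbMask j) (nbMask i) = 0)
    (hq : HasPoly R (gridCover p (clear a (1 <<< i)) b) q) :
    HasPoly R (gridCover p a b) (X * q) := by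
  rw [gridCover, strip_clear_bit] at hq
  refine hasPoly_cover_of_dominated_left (add_mem_strip.2 hai) (add_mem_strip.2 haj)
    (by simpa using hji) (fun _ hy hr => ?_) hq
  exact gridRel_comm.1 (gridRel_of_clear_eq_zero hi hj h hy (gridRel_comm.1 hr))

lemma hasPoly_gridCover_of_disjoint_left (hi : 3 ≤ i) (ha : a.testBit i = true)
    (hq₁ : HasPoly R (gridCover p (clear a (1 <<< i)) b) q₁)
    (hq₂ : HasPoly R (gridCover p (clear a (1 <<< i)) (clear b (nbMask i))) q₂)
    (h : ∀ k, q₁.coeff k = 0 ∨ q₂.coeff k = 0) :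
    HasPoly R (gridCover p a b) (q₂ + X * q₁) := by
  simp only [gridCover, strip_clear_bit, strip_clear_nbMask p b hi] at hq₁ hq₂
  exact hasPoly_cover_of_disjoint_left (add_mem_strip.2 ha) hq₁ hq₂ h

lemma hasPoly_gridCover_of_disjoint_right {n : ℕ} (hi : 3 ≤ i) (hb : b.testBit i = true)
    (hn : (nbBits a i).card = n + 1) (hq₁ : HasPoly R (gridCover p a (clear b (1 <<< i))) q₁)
    (hq₂ : HasPoly R (gridCover p (clear a (nbMask i)) (clear b (1 <<< i))) q₂)
    (h : ∀ k, q₁.coeff k = 0 ∨ (X ^ (n + 1) * q₂).coeff k = 0) :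
    HasPoly R (gridCover p a b) (X ^ n * q₂ + q₁) := by
  simp only [gridCover, strip_clear_bit, strip_clear_nbMask' p a hi] at hq₁ hq₂
  exact hasPoly_cover_of_disjoint_right (add_self_notMem_strip p a) (add_mem_strip.2 hb)
    (mem_map_nbBits p a hi) (by rwa [Finset.card_map]) hq₁ hq₂ h

end Nontrivial

section RankCount

variable [IsDomain R]

lemma hasPoly_gridCover_split_left {n : ℕ} (hi : 3 ≤ i) (ha : a.testBit i = true)
    (hj : 3 ≤ j) (hb : b.testBit j = true) (hij : (nbMask i).testBit j = true)
    (hn : (nbBits (clear a (1 <<< i)) j).card = n)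
    (hq₁ : HasPoly R (gridCover p (clear a (1 <<< i)) b) q₁)
    (hq₂ : HasPoly R (gridCover p (clear a (1 <<< i)) (clear b (nbMask i))) q₂)
    (hq₃ : HasPoly R (gridCover p (clear a (1 <<< i)) (clear b (1 <<< j))) q₃)
    (hq₄ : HasPoly R
      (gridCover p (clear (clear a (1 <<< i)) (nbMask j)) (clear b (1 <<< j))) q₄)
    (h : X ^ n * q₄ = q₃ + X * q₁) :
    HasPoly R (gridCover p a b) (q₂ + X * q₁) := by
  have hS := mem_map_nbBits p (clear a (1 <<< i)) hj
  simp only [gridCover, strip_clear_bit, strip_clear_nbMask' _ _ hj, strip_clear_nbMask _ _ hi]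
    at hq₁ hq₂ hq₃ hq₄ hS
  exact hasPoly_cover_split_left (add_self_notMem_strip p a) (add_mem_strip.2 ha)
    (add_mem_strip.2 hb) (gridRel_of_testBit_nbMask hi hij) hS hq₁ hq₂ hq₃ hq₄
    (by rwa [Finset.card_map, hn])

lemma hasPoly_gridCover_split_right {n : ℕ} (hi : 3 ≤ i) (ha : a.testBit i = true) (hj : 3 ≤ j)
    (hb : b.testBit j = true) (hij : (nbMask i).testBit j = true)
    (hn : (nbBits a j).card = n + 1)
    (hq₁ : HasPoly R (gridCover p a (clear b (1 <<< j))) q₁)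
    (hq₂ : HasPoly R (gridCover p (clear a (nbMask j)) (clear b (1 <<< j))) q₂)
    (hq₃ : HasPoly R (gridCover p (clear a (1 <<< i)) (clear b (1 <<< j))) q₃)
    (hq₄ : HasPoly R
      (gridCover p (clear a (1 <<< i)) (clear (clear b (1 <<< j)) (nbMask i))) (q₃ + q₁)) :
    HasPoly R (gridCover p a b) (X ^ n * q₂ + q₁) := by
  simp only [gridCover, strip_clear_bit, strip_clear_nbMask' _ _ hj, strip_clear_nbMask _ _ hi]
    at hq₁ hq₂ hq₃ hq₄
  exact hasPoly_cover_split_right (add_self_notMem_strip p a) (add_mem_strip.2 ha)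
    (add_mem_strip.2 hb) (gridRel_of_testBit_nbMask hi hij) (mem_map_nbBits p a hj)
    (by rwa [Finset.card_map]) hq₁ hq₂ hq₃ hq₄

lemma hasPoly_gridCover_of_shrink (hi : 3 ≤ i) (ha : a.testBit i = true)
    (hij : (nbMask i).testBit j = true) (hik : (nbMask i).testBit k = true)
    (hq₁ : HasPoly R (gridCover p (clear a (1 <<< i)) b) q₁)
    (hq₂ : HasPoly R (gridCover p (clear a (1 <<< i)) (clear b (nbMask i))) q₂)
    (hq₃ : HasPoly R (gridCover p (clear a (1 <<< i)) (clear b (1 <<< j ||| 1 <<< k))) q₃)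
    (hq₄ : HasPoly R (gridCover p a (clear b (1 <<< j ||| 1 <<< k))) (q₂ + X * q₃)) :
    HasPoly R (gridCover p a b) (q₂ + X * q₁) := by
  simp only [gridCover, strip_clear_bit, strip_clear_two_bits, strip_clear_nbMask _ _ hi]
    at hq₁ hq₂ hq₃ hq₄
  refine hasPoly_cover_of_shrink (add_mem_strip.2 ha) Set.sdiff_subset (fun v hv => ⟨hv.1, ?_⟩)
    hq₁ hq₂ hq₃ hq₄
  rintro (rfl | rfl)
  exacts [hv.2 (gridRel_of_testBit_nbMask hi hij), hv.2 (gridRel_of_testBit_nbMask hi hik)]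

end RankCount

end Grid
section Folding

/-- The list of coefficients of `X ^ s * p`, for `l` the list of coefficients of `p`. The empty list
is kept, so that it remains the only list standing for `0` that occurs. -/
def shiftDigits (s : ℕ) (l : List ℕ) : List ℕ := if l = [] then [] else List.replicate s 0 ++ l

/-- The list of coefficients of the sum of two polynomials. -/
def addDigits : List ℕ → List ℕ → List ℕ
  | [], l => l
  | l, [] => l
  | c :: l, d :: m => (c + d) :: addDigits l m

/-- One folding move at the bit `i` of the complex `gridCover p a b`: the new masks and the
degree by which the homology is shifted. The vertex `i` is removed from the left together with its
neighbours if it is the only neighbour of some `j`, and from the right or the left if its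
neighbourhood contains that of some `j` on the same side. -/
def foldAt (a b i : ℕ) : Option (ℕ × ℕ × ℕ) :=
  if a.testBit i ∧ ∃ j ∈ List.range' 3 (i + 4), b.testBit j ∧ a &&& nbMask j = 1 <<< i then
    some (0, clear a (1 <<< i), clear b (nbMask i))
  else if b.testBit i ∧ ∃ j ∈ List.range' 3 (i + 4),
      j ≠ i ∧ b.testBit j ∧ clear (a &&& nbMask j) (nbMask i) = 0 then
    some (0, a, clear b (1 <<< i))
  else if a.testBit i ∧ ∃ j ∈ List.range' 3 (i + 4),
      j ≠ i ∧ a.testBit j ∧ clear (b &&& nbMask j) (nbMask i) = 0 then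
    some (1, clear a (1 <<< i), b)
  else none

/-- The bits at which the masks `a` and `b` may be folded; those below `3` are excluded because of
the restriction in `nbMask`. -/
def positions (a b : ℕ) : List ℕ := List.range' 3 (max a.log2 b.log2)

/-- At most `n` folding moves, performed until the masks are `t` or no move is possible. The result
consists of the total shift of degrees and the final masks. -/
def fold (t : ℕ × ℕ) : ℕ → ℕ → ℕ → ℕ × ℕ × ℕ
  | 0, a, b => (0, a, b)
  | n + 1, a, b =>
    if (a, b) = t then (0, a, b) else
      match (positions a b).findSome? (foldAt a b) with
      | none => (0, a, b)
      | some (s, a', b') => ((fold t n a' b').1 + s, (fold t n a' b').2)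

/-- Fold the masks and continue with `f`. Every move removes a bit, which bounds their number. -/
def foldThen (t : ℕ × ℕ) (f : ℕ → ℕ → Option (List ℕ)) (a b : ℕ) : Option (List ℕ) :=
  let r := fold t (a.log2 + b.log2 + 2) a b
  (f r.2.1 r.2.2).map (shiftDigits r.1)

/-- The evaluation of completely folded masks: the complex is the target or acyclic, as some vertex
has no neighbours. -/
def leafDigits (t : ℕ × ℕ) (a b : ℕ) : Option (List ℕ) :=
  if (a, b) = t then some [1]
  else if ∃ i ∈ positions a b,
      (b.testBit i ∧ a &&& nbMask i = 0) ∨ (a.testBit i ∧ b &&& nbMask i = 0) then some []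
  else none

/-- A condition on two lists of coefficients which ensures that the polynomials, multiplied by the
polynomial of the complex with masks `t`, have no exponent in common. For `t = (0, 0)` the latter
is `1`. -/
def NoCommonExponent (t : ℕ × ℕ) (l m : List ℕ) : Prop :=
  l = [] ∨ m = [] ∨ t = (0, 0) ∧ ∀ x ∈ l.zip m, x.1 = 0 ∨ x.2 = 0

instance (t : ℕ × ℕ) (l m : List ℕ) : Decidable (NoCommonExponent t l m) := by
  unfold NoCommonExponent
  infer_instance

/-- The evaluation of a splitting at the vertex `i` on the left, from evaluations `f` of the link
and `g` of the deletion. -/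
def leftDigits (t : ℕ × ℕ) (i : ℕ) (f g : ℕ → ℕ → Option (List ℕ)) (a b : ℕ) :
    Option (List ℕ) := do
  let l ← f (clear a (1 <<< i)) b
  let m ← g (clear a (1 <<< i)) (clear b (nbMask i))
  guard ((3 ≤ i ∧ a.testBit i = true) ∧ NoCommonExponent t l m)
  return addDigits m (shiftDigits 1 l)

/-- The evaluation of a splitting at the vertex `i` on the right, from an evaluation `f` of the
complex without `i` and an evaluation `g` of the complex where also the neighbours of `i` are
removed. -/
def rightDigits (t : ℕ × ℕ) (i : ℕ) (f g : ℕ → ℕ → Option (List ℕ)) (a b : ℕ) :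
    Option (List ℕ) := do
  let l ← f a (clear b (1 <<< i))
  let m ← g (clear a (nbMask i)) (clear b (1 <<< i))
  guard ((3 ≤ i ∧ b.testBit i = true) ∧ (nbBits a i).Nonempty ∧
    NoCommonExponent t l (shiftDigits (nbBits a i).card m))
  return addDigits (shiftDigits ((nbBits a i).card - 1) m) l

/-- A tree of vertices at which to split a complex that admits no more folding moves. -/
inductive Splitting
  | leaf
  | left (i : ℕ) (link del : Splitting)
  | right (i : ℕ) (link del : Splitting)

/-- The evaluation of the complex with masks `a` and `b` in terms of the complex with masks `t`: the
coefficients of the quotient of their Poincaré polynomials. -/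
def digits (t : ℕ × ℕ) : Splitting → ℕ → ℕ → Option (List ℕ)
  | .leaf => foldThen t (leafDigits t)
  | .left i c d => foldThen t (leftDigits t i (digits t c) (digits t d))
  | .right i c d => foldThen t (rightDigits t i (digits t c) (digits t d))

lemma ofDigits_shiftDigits (s : ℕ) (l : List ℕ) :
    Nat.ofDigits (X : ℕ[X]) (shiftDigits s l) = X ^ s * Nat.ofDigits X l := by
  rcases eq_or_ne l [] with rfl | hl
  · simp [shiftDigits, Nat.ofDigits]
  rw [shiftDigits, if_neg hl]
  induction s with
  | zero => simp
  | succ s ih =>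
    rw [List.replicate_succ, List.cons_append, Nat.ofDigits, ih, pow_succ', mul_assoc,
      Nat.cast_zero, zero_add]

lemma ofDigits_addDigits : ∀ l m : List ℕ,
    Nat.ofDigits (X : ℕ[X]) (addDigits l m) = Nat.ofDigits X l + Nat.ofDigits X m
  | [], l => by simp [addDigits, Nat.ofDigits]
  | c :: l, [] => by simp [addDigits, Nat.ofDigits]
  | c :: l, d :: m => by
    simp only [addDigits, Nat.ofDigits, ofDigits_addDigits l m, Nat.cast_add]
    ring

lemma coeff_ofDigits_X_eq_zero_or : ∀ {l m : List ℕ}, (∀ x ∈ l.zip m, x.1 = 0 ∨ x.2 = 0) →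
    ∀ k, (Nat.ofDigits (X : ℕ[X]) l).coeff k = 0 ∨ (Nat.ofDigits (X : ℕ[X]) m).coeff k = 0
  | [], _, _, _ => Or.inl rfl
  | _ :: _, [], _, _ => Or.inr rfl
  | c :: l, d :: m, h, k => by
    rw [List.zip_cons_cons, List.forall_mem_cons] at h
    cases k with
    | zero => simpa [Nat.ofDigits] using h.1
    | succ k =>
      simpa [Nat.ofDigits, coeff_natCast_ite] using coeff_ofDigits_X_eq_zero_or h.2 k

variable {t : ℕ × ℕ} {n p a b i s a' b' : ℕ} {l m : List ℕ} {q : ℕ[X]}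

lemma NoCommonExponent.coeff_eq_zero_or (h : NoCommonExponent t l m) (hq : t = (0, 0) → q = 1)
    (k : ℕ) : (Nat.ofDigits X l * q).coeff k = 0 ∨ (Nat.ofDigits X m * q).coeff k = 0 := by
  rcases h with rfl | rfl | ⟨ht, h⟩
  · simp [Nat.ofDigits]
  · simp [Nat.ofDigits]
  · simpa [hq ht] using coeff_ofDigits_X_eq_zero_or h k

variable {R : Type*} [CommRing R] [Nontrivial R]

lemma hasPoly_of_foldAt (hi : 3 ≤ i) (h : foldAt a b i = some (s, a', b'))
    (hq : HasPoly R (gridCover p a' b') q) : HasPoly R (gridCover p a b) (X ^ s * q) := by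
  unfold foldAt at h
  split_ifs at h with h₁ h₂ h₃ <;> obtain ⟨rfl, rfl, rfl⟩ : _ ∧ _ ∧ _ := by simpa using h
  · obtain ⟨ha, j, hj, hb, hij⟩ := h₁
    rw [pow_zero, one_mul]
    exact hasPoly_gridCover_of_unique_neighbor hi (List.left_le_of_mem_range' hj) ha hb hij hq
  · obtain ⟨-, j, hj, hji, hb, hij⟩ := h₂
    rwa [pow_zero, one_mul,
      ← gridCover_clear_of_dominated hi (List.left_le_of_mem_range' hj) hji hb hij]
  · obtain ⟨hai, j, hj, hji, haj, hij⟩ := h₃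
    rw [pow_one]
    exact hasPoly_gridCover_of_dominated_left hi (List.left_le_of_mem_range' hj) hji hai haj hij hq

lemma hasPoly_of_fold
    (hq : HasPoly R (gridCover p (fold t n a b).2.1 (fold t n a b).2.2) q) :
    HasPoly R (gridCover p a b) (X ^ (fold t n a b).1 * q) := by
  induction n generalizing a b with
  | zero => simpa [fold] using hq
  | succ n ih =>
    rw [fold] at hq ⊢
    split_ifs at hq ⊢ with hab
    · simpa using hq
    cases h : (positions a b).findSome? (foldAt a b) with
    | none => simpa [h] using hq
    | some r =>
      obtain ⟨s, a', b'⟩ := r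
      simp only [h] at hq ⊢
      obtain ⟨i, hi, hs⟩ := List.exists_of_findSome?_eq_some h
      rw [pow_add, mul_comm (X ^ _), mul_assoc]
      exact hasPoly_of_foldAt (List.left_le_of_mem_range' hi) hs (ih hq)

/-- The evaluation `f` gives the coefficients of the quotients by `q` of the Poincaré polynomials of
the complexes `gridCover p a b`. -/
def ComputesPoly (R : Type*) [CommRing R] (p : ℕ) (q : ℕ[X])
    (f : ℕ → ℕ → Option (List ℕ)) : Prop :=
  ∀ ⦃a b r⦄, f a b = some r → HasPoly R (gridCover p a b) (Nat.ofDigits X r * q)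

variable {f g : ℕ → ℕ → Option (List ℕ)}

lemma ComputesPoly.foldThen (hf : ComputesPoly R p q f) :
    ComputesPoly R p q (foldThen t f) := fun a b r h => by
  obtain ⟨l, hl, rfl⟩ := Option.map_eq_some_iff.1 h
  rw [ofDigits_shiftDigits, mul_assoc]
  exact hasPoly_of_fold (hf hl)

lemma computesPoly_leafDigits (ht : HasPoly R (gridCover p t.1 t.2) q) :
    ComputesPoly R p q (leafDigits t) := fun a b r h => by
  unfold leafDigits at h
  split_ifs at h with h₁ h₂ <;> obtain rfl := Option.some.inj h
  · subst h₁
    simpa [Nat.ofDigits] using ht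
  · rw [Nat.ofDigits, zero_mul]
    obtain ⟨i, hi, ⟨hb, ha⟩ | ⟨ha, hb⟩⟩ := h₂
    · exact hasPoly_gridCover_of_isolated_right (List.left_le_of_mem_range' hi) hb ha
    · exact hasPoly_gridCover_of_isolated_left (List.left_le_of_mem_range' hi) ha hb

lemma ComputesPoly.leftDigits (hq : t = (0, 0) → q = 1) (hf : ComputesPoly R p q f)
    (hg : ComputesPoly R p q g) : ComputesPoly R p q (leftDigits t i f g) := fun a b r h => by
  simp only [GridDominance.leftDigits, Option.bind_eq_bind, Option.bind_eq_some_iff,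
    Option.guard_eq_some', Option.pure_def, Option.some.injEq, exists_const] at h
  obtain ⟨l, hl, m, hm, ⟨⟨hi, ha⟩, hlm⟩, rfl⟩ := h
  rw [ofDigits_addDigits, ofDigits_shiftDigits, pow_one, add_mul, mul_assoc]
  exact hasPoly_gridCover_of_disjoint_left hi ha (hf hl) (hg hm) (hlm.coeff_eq_zero_or hq)

lemma ComputesPoly.rightDigits (hq : t = (0, 0) → q = 1) (hf : ComputesPoly R p q f)
    (hg : ComputesPoly R p q g) : ComputesPoly R p q (rightDigits t i f g) := fun a b r h => by
  simp only [GridDominance.rightDigits, Option.bind_eq_bind, Option.bind_eq_some_iff,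
    Option.guard_eq_some', Option.pure_def, Option.some.injEq, exists_const] at h
  obtain ⟨l, hl, m, hm, ⟨⟨hi, hb⟩, hn, hlm⟩, rfl⟩ := h
  obtain ⟨n, hn⟩ := Nat.exists_eq_succ_of_ne_zero (Finset.card_ne_zero.2 hn)
  rw [ofDigits_addDigits, ofDigits_shiftDigits, add_mul, mul_assoc, hn, Nat.succ_sub_one]
  refine hasPoly_gridCover_of_disjoint_right hi hb hn (hf hl) (hg hm) fun k => ?_
  simpa only [ofDigits_shiftDigits, mul_assoc, hn] using hlm.coeff_eq_zero_or hq k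

lemma computesPoly_digits (ht : HasPoly R (gridCover p t.1 t.2) q) (hq : t = (0, 0) → q = 1) :
    ∀ c, ComputesPoly R p q (digits t c)
  | .leaf => (computesPoly_leafDigits ht).foldThen
  | .left _ c d =>
    ((computesPoly_digits ht hq c).leftDigits hq (computesPoly_digits ht hq d)).foldThen
  | .right _ c d =>
    ((computesPoly_digits ht hq c).rightDigits hq (computesPoly_digits ht hq d)).foldThen

end Folding

section Recursion

/-- Two columns of bits, both with all three rows. -/
def full : ℕ := 7 + 8 * 7

/-- Two columns of bits, the first with the middle row and the second with all three rows. -/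
def middleFull : ℕ := 2 + 8 * 7

/-- Two columns of bits, the first with all three rows and the second with the outer rows. -/
def fullOuter : ℕ := 7 + 8 * 5

/-- Two columns of bits, the first with all three rows and the second with the middle row. -/
def fullMiddle : ℕ := 7 + 8 * 2

/-- Two columns of bits, the first with the outer rows and the second with all three rows. -/
def outerFull : ℕ := 5 + 8 * 7

/-- Two columns of bits, both with the outer rows. -/
def outerOuter : ℕ := 5 + 8 * 5

/-- The covering complex on `m + 2` columns, where all vertices in the first `m` columns are
present on both sides, and the last two columns are given by the masks `a` and `b`. -/
def endCover (a b m : ℕ) : LowerSet (Set ℕ) := gridCover (m + 1) a b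

variable {R : Type*} [CommRing R] {a b a' b' i j m : ℕ} {p q q' r t : ℕ[X]}

lemma endCover_add (a b m j : ℕ) :
    endCover a b (m + j) = gridCover (m + 1) (padBits j a) (padBits j b) :=
  gridCover_pad m j a b

/-- The Poincaré polynomial of `endCover middleFull fullOuter m`. -/
noncomputable def polyU : ℕ → ℕ[X]
  | 0 => 2 * X
  | 1 => X ^ 2 + X ^ 3
  | m + 2 => X ^ ((5 * (m + 2) + 4) / 3) + X ^ 3 * polyU m

/-- The Poincaré polynomial of `endCover fullMiddle outerFull m`. -/
noncomputable def polyW : ℕ → ℕ[X]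
  | 0 => 2 * X
  | 1 => 2 * X ^ 3
  | m + 2 => X ^ ((5 * (m + 2) + 5) / 3) + X ^ 3 * polyW m

/-- The Poincaré polynomial of the covering complex of the grid with `m + 4` columns. -/
noncomputable def polyGrid (m : ℕ) : ℕ[X] := X ^ 2 * polyU (m + 2) + X ^ 5 * polyW m

section Nontrivial

variable [Nontrivial R]

lemma hasPoly_gridCover_zero_of_digits (l : List ℕ) (c : Splitting)
    (h : digits (0, 0) c a b = some l) : HasPoly R (gridCover 0 a b) (Nat.ofDigits X l) := by
  simpa only [mul_one] using
    computesPoly_digits (t := (0, 0)) hasPoly_gridCover_zero (fun _ => rfl) c h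

lemma hasPoly_endCover_of_digits (l : List ℕ) (c : Splitting)
    (h : digits (0, 0) c (8 * padBits m a) (8 * padBits m b) = some l)
    (hq : q = Nat.ofDigits X l) : HasPoly R (endCover a b m) q := by
  have he := endCover_add a b 0 m
  rw [zero_add, gridCover, strip_one, strip_one] at he
  rw [he, hq]
  exact hasPoly_gridCover_zero_of_digits l c h

lemma hasPoly_gridCover_of_endCover_shift (s : ℕ) (c : Splitting)
    (h : HasPoly R (endCover a b (m + j)) q)
    (hc : digits (padBits j a, padBits j b) c a' b' = some (List.replicate s 0 ++ [1]))
    (h₀ : (padBits j a, padBits j b) ≠ (0, 0)) :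
    HasPoly R (gridCover (m + 1) a' b') (X ^ s * q) := by
  rw [endCover_add] at h
  have hs : Nat.ofDigits X (List.replicate s 0 ++ [1]) = (X : ℕ[X]) ^ s := by
    simpa [shiftDigits, Nat.ofDigits] using ofDigits_shiftDigits s [1]
  rw [← hs]
  exact computesPoly_digits (t := (padBits j a, padBits j b)) h (absurd · h₀) c hc

lemma hasPoly_gridCover_of_endCover (h : HasPoly R (endCover a b (m + j)) q)
    (hc : digits (padBits j a, padBits j b) .leaf a' b' = some [1])
    (h₀ : (padBits j a, padBits j b) ≠ (0, 0)) : HasPoly R (gridCover (m + 1) a' b') q := by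
  simpa only [pow_zero, one_mul] using hasPoly_gridCover_of_endCover_shift 0 .leaf h hc h₀

lemma hasPoly_outerOuter_fullMiddle_add_two
    (h : HasPoly R (endCover outerOuter middleFull (m + 1)) q) :
    HasPoly R (endCover outerOuter fullMiddle (m + 2)) (X ^ 2 * q) := by
  rw [endCover_add]
  exact hasPoly_gridCover_of_endCover_shift 2 (.left 4 (.right 10 .leaf .leaf) .leaf) h
    (by decide +kernel) (by decide)

lemma hasPoly_outerOuter_middleFull_add_three
    (h : HasPoly R (endCover outerOuter fullMiddle (m + 1)) q) :
    HasPoly R (endCover outerOuter middleFull (m + 3)) (X ^ 3 * q) := by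
  rw [endCover_add]
  exact hasPoly_gridCover_of_endCover_shift 3 (.right 8 (.right 14 .leaf .leaf) .leaf) h
    (by decide +kernel) (by decide)

lemma hasPoly_fullMiddle_outerOuter_add_two
    (h : HasPoly R (endCover middleFull outerOuter (m + 1)) q) :
    HasPoly R (endCover fullMiddle outerOuter (m + 2)) (X ^ 2 * q) := by
  rw [endCover_add]
  exact hasPoly_gridCover_of_endCover_shift 2 (.right 4 (.left 10 .leaf .leaf) .leaf) h
    (by decide +kernel) (by decide)

lemma hasPoly_middleFull_outerOuter_add_three
    (h : HasPoly R (endCover fullMiddle outerOuter (m + 1)) q) :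
    HasPoly R (endCover middleFull outerOuter (m + 3)) (X ^ 3 * q) := by
  rw [endCover_add]
  exact hasPoly_gridCover_of_endCover_shift 3 (.left 8 (.left 14 .leaf .leaf) .leaf) h
    (by decide +kernel) (by decide)

lemma hasPoly_outerOuter_fullMiddle_of_lt (hm : m < 2) :
    HasPoly R (endCover outerOuter fullMiddle m) (X ^ ((5 * m + 5) / 3)) := by
  interval_cases m
  · refine hasPoly_endCover_of_digits [0, 1] (.left 8 .leaf .leaf) (by decide +kernel) ?_
    simp [Nat.ofDigits]
  · refine hasPoly_endCover_of_digits [0, 0, 0, 1] (.left 8 .leaf .leaf) (by decide +kernel) ?_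
    norm_num [Nat.ofDigits]
    ring

lemma hasPoly_outerOuter_middleFull_of_lt (hm : m < 3) :
    HasPoly R (endCover outerOuter middleFull m) (X ^ ((5 * m + 4) / 3)) := by
  interval_cases m
  · refine hasPoly_endCover_of_digits [0, 1] (.left 8 .leaf .leaf) (by decide +kernel) ?_
    simp [Nat.ofDigits]
  · refine hasPoly_endCover_of_digits [0, 0, 0, 1] (.left 11 .leaf .leaf) (by decide +kernel) ?_
    norm_num [Nat.ofDigits]
    ring
  · refine hasPoly_endCover_of_digits [0, 0, 0, 0, 1] (.left 14 .leaf (.left 8 .leaf .leaf))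
      (by decide +kernel) ?_
    norm_num [Nat.ofDigits]
    ring

lemma hasPoly_fullMiddle_outerOuter_of_lt (hm : m < 2) :
    HasPoly R (endCover fullMiddle outerOuter m) (X ^ ((5 * m + 5) / 3)) := by
  interval_cases m
  · refine hasPoly_endCover_of_digits [0, 1] (.right 8 .leaf .leaf) (by decide +kernel) ?_
    simp [Nat.ofDigits]
  · refine hasPoly_endCover_of_digits [0, 0, 0, 1] (.right 8 .leaf .leaf) (by decide +kernel) ?_
    norm_num [Nat.ofDigits]
    ring

lemma hasPoly_middleFull_outerOuter_of_lt (hm : m < 3) :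
    HasPoly R (endCover middleFull outerOuter m) (X ^ ((5 * m + 4) / 3)) := by
  interval_cases m
  · refine hasPoly_endCover_of_digits [0, 1] (.left 8 .leaf .leaf) (by decide +kernel) ?_
    simp [Nat.ofDigits]
  · refine hasPoly_endCover_of_digits [0, 0, 0, 1] (.left 11 .leaf .leaf) (by decide +kernel) ?_
    norm_num [Nat.ofDigits]
    ring
  · refine hasPoly_endCover_of_digits [0, 0, 0, 0, 1] (.left 14 .leaf (.right 8 .leaf .leaf))
      (by decide +kernel) ?_
    norm_num [Nat.ofDigits]
    ring

lemma hasPoly_middleFull_fullOuter_of_lt (hm : m < 5) :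
    HasPoly R (endCover middleFull fullOuter m) (polyU m) := by
  interval_cases m
  · refine hasPoly_endCover_of_digits [0, 2] (.right 8 .leaf .leaf) (by decide +kernel) ?_
    norm_num [Nat.ofDigits, polyU]
    ring
  · refine hasPoly_endCover_of_digits [0, 0, 1, 1] (.left 10 .leaf .leaf) (by decide +kernel) ?_
    norm_num [Nat.ofDigits, polyU]
    ring
  · refine hasPoly_endCover_of_digits [0, 0, 0, 0, 3] (.right 14 .leaf (.right 11 .leaf .leaf))
      (by decide +kernel) ?_
    norm_num [Nat.ofDigits, polyU]
    ring
  · refine hasPoly_endCover_of_digits [0, 0, 0, 0, 0, 1, 2] (.left 16 .leaf (.left 7 .leaf .leaf))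
      (by decide +kernel) ?_
    norm_num [Nat.ofDigits, polyU]
    ring
  · refine hasPoly_endCover_of_digits [0, 0, 0, 0, 0, 0, 0, 3, 1]
      (.left 19 .leaf (.left 13 .leaf (.left 10 .leaf .leaf))) (by decide +kernel) ?_
    norm_num [Nat.ofDigits, polyU]
    ring

lemma hasPoly_fullOuter_middleFull_of_lt (hm : m < 5) :
    HasPoly R (endCover fullOuter middleFull m) (X * polyU m) := by
  interval_cases m
  · refine hasPoly_endCover_of_digits [0, 0, 2] (.left 8 .leaf .leaf) (by decide +kernel) ?_
    norm_num [Nat.ofDigits, polyU]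
    ring
  · refine hasPoly_endCover_of_digits [0, 0, 0, 1, 1] (.right 10 .leaf .leaf) (by decide +kernel) ?_
    norm_num [Nat.ofDigits, polyU]
    ring
  · refine hasPoly_endCover_of_digits [0, 0, 0, 0, 0, 3] (.left 14 .leaf (.left 11 .leaf .leaf))
      (by decide +kernel) ?_
    norm_num [Nat.ofDigits, polyU]
    ring
  · refine hasPoly_endCover_of_digits [0, 0, 0, 0, 0, 0, 1, 2]
      (.right 16 .leaf (.right 7 .leaf .leaf)) (by decide +kernel) ?_
    norm_num [Nat.ofDigits, polyU]
    ring
  · refine hasPoly_endCover_of_digits [0, 0, 0, 0, 0, 0, 0, 0, 3, 1]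
      (.right 19 .leaf (.right 13 .leaf (.right 10 .leaf .leaf))) (by decide +kernel) ?_
    norm_num [Nat.ofDigits, polyU]
    ring

lemma hasPoly_fullMiddle_outerFull_of_lt (hm : m < 4) :
    HasPoly R (endCover fullMiddle outerFull m) (polyW m) := by
  interval_cases m
  · refine hasPoly_endCover_of_digits [0, 2] (.right 8 .leaf .leaf) (by decide +kernel) ?_
    norm_num [Nat.ofDigits, polyW]
    ring
  · refine hasPoly_endCover_of_digits [0, 0, 0, 2] (.left 7 .leaf .leaf) (by decide +kernel) ?_
    norm_num [Nat.ofDigits, polyW]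
    ring
  · refine hasPoly_endCover_of_digits [0, 0, 0, 0, 2, 1] (.left 13 .leaf (.left 10 .leaf .leaf))
      (by decide +kernel) ?_
    norm_num [Nat.ofDigits, polyW]
    ring
  · refine hasPoly_endCover_of_digits [0, 0, 0, 0, 0, 0, 3]
      (.right 17 (.right 15 .leaf .leaf) .leaf) (by decide +kernel) ?_
    norm_num [Nat.ofDigits, polyW]
    ring

lemma hasPoly_outerFull_fullMiddle_of_lt (hm : m < 4) :
    HasPoly R (endCover outerFull fullMiddle m) (X * polyW m) := by
  interval_cases m
  · refine hasPoly_endCover_of_digits [0, 0, 2] (.left 8 .leaf .leaf) (by decide +kernel) ?_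
    norm_num [Nat.ofDigits, polyW]
    ring
  · refine hasPoly_endCover_of_digits [0, 0, 0, 0, 2] (.right 7 .leaf .leaf) (by decide +kernel) ?_
    norm_num [Nat.ofDigits, polyW]
    ring
  · refine hasPoly_endCover_of_digits [0, 0, 0, 0, 0, 2, 1]
      (.right 13 .leaf (.right 10 .leaf .leaf)) (by decide +kernel) ?_
    norm_num [Nat.ofDigits, polyW]
    ring
  · refine hasPoly_endCover_of_digits [0, 0, 0, 0, 0, 0, 0, 3]
      (.left 17 (.left 15 .leaf .leaf) .leaf) (by decide +kernel) ?_
    norm_num [Nat.ofDigits, polyW]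
    ring

lemma hasPoly_outerOuter_fullMiddle_and_middleFull (m : ℕ) :
    HasPoly R (endCover outerOuter fullMiddle m) (X ^ ((5 * m + 5) / 3)) ∧
      HasPoly R (endCover outerOuter middleFull m) (X ^ ((5 * m + 4) / 3)) := by
  induction m using Nat.strong_induction_on with | _ m ih
  constructor
  · rcases lt_or_ge m 2 with h | h
    · exact hasPoly_outerOuter_fullMiddle_of_lt h
    obtain ⟨m, rfl⟩ := Nat.exists_eq_add_of_le' h
    rw [show (5 * (m + 2) + 5) / 3 = 2 + (5 * (m + 1) + 4) / 3 by omega, pow_add]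
    exact hasPoly_outerOuter_fullMiddle_add_two (ih (m + 1) (by omega)).2
  · rcases lt_or_ge m 3 with h | h
    · exact hasPoly_outerOuter_middleFull_of_lt h
    obtain ⟨m, rfl⟩ := Nat.exists_eq_add_of_le' h
    rw [show (5 * (m + 3) + 4) / 3 = 3 + (5 * (m + 1) + 5) / 3 by omega, pow_add]
    exact hasPoly_outerOuter_middleFull_add_three (ih (m + 1) (by omega)).1

lemma hasPoly_fullMiddle_outerOuter_and_middleFull (m : ℕ) :
    HasPoly R (endCover fullMiddle outerOuter m) (X ^ ((5 * m + 5) / 3)) ∧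
      HasPoly R (endCover middleFull outerOuter m) (X ^ ((5 * m + 4) / 3)) := by
  induction m using Nat.strong_induction_on with | _ m ih
  constructor
  · rcases lt_or_ge m 2 with h | h
    · exact hasPoly_fullMiddle_outerOuter_of_lt h
    obtain ⟨m, rfl⟩ := Nat.exists_eq_add_of_le' h
    rw [show (5 * (m + 2) + 5) / 3 = 2 + (5 * (m + 1) + 4) / 3 by omega, pow_add]
    exact hasPoly_fullMiddle_outerOuter_add_two (ih (m + 1) (by omega)).2
  · rcases lt_or_ge m 3 with h | h
    · exact hasPoly_middleFull_outerOuter_of_lt h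
    obtain ⟨m, rfl⟩ := Nat.exists_eq_add_of_le' h
    rw [show (5 * (m + 3) + 4) / 3 = 3 + (5 * (m + 1) + 5) / 3 by omega, pow_add]
    exact hasPoly_middleFull_outerOuter_add_three (ih (m + 1) (by omega)).1

lemma hasPoly_full_full_zero : HasPoly R (endCover full full 0) (3 * X ^ 3) := by
  refine hasPoly_endCover_of_digits [0, 0, 0, 3] (.left 8 (.right 8 .leaf .leaf) .leaf)
    (by decide +kernel) ?_
  norm_num [Nat.ofDigits]
  ring

lemma hasPoly_full_full_one : HasPoly R (endCover full full 1) (X ^ 4 + 2 * X ^ 5) := by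
  refine hasPoly_endCover_of_digits [0, 0, 0, 0, 1, 2] (.left 10 (.right 10 .leaf .leaf) .leaf)
    (by decide +kernel) ?_
  norm_num [Nat.ofDigits]
  ring

lemma hasPoly_full_full_two : HasPoly R (endCover full full 2) (5 * X ^ 6) := by
  refine hasPoly_endCover_of_digits [0, 0, 0, 0, 0, 0, 5] (.left 14 (.left 13 .leaf .leaf)
    (.left 13 (.left 11 .leaf .leaf) .leaf)) (by decide +kernel) ?_
  norm_num [Nat.ofDigits]
  ring

lemma hasPoly_one_column : HasPoly R (gridCover 0 56 56) X := by
  simpa [Nat.ofDigits] using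
    hasPoly_gridCover_zero_of_digits (R := R) (a := 56) (b := 56) [0, 1] .leaf (by decide +kernel)

end Nontrivial

lemma pow_mul_polyW_add_three (m : ℕ) : X ^ 3 * polyW (m + 3) =
    X ^ 6 * polyW (m + 1) + X ^ ((5 * (m + 5) + 4) / 3) := by
  rw [polyW, show (5 * (m + 5) + 4) / 3 = (5 * (m + 1 + 2) + 5) / 3 + 3 by omega]
  ring

lemma pow_mul_polyU_add_three (m : ℕ) : X ^ 2 * polyU (m + 3) =
    X ^ 5 * polyU (m + 1) + X ^ ((5 * (m + 4) + 5) / 3) := by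
  rw [polyU, show (5 * (m + 4) + 5) / 3 = (5 * (m + 1 + 2) + 4) / 3 + 2 by omega]
  ring

/-- The Poincaré polynomials of the four families of complexes whose recursions split a vertex. -/
def HasSplitPolys (R : Type*) [CommRing R] (m : ℕ) : Prop :=
  (HasPoly R (endCover middleFull fullOuter m) (polyU m) ∧
      HasPoly R (endCover fullOuter middleFull m) (X * polyU m)) ∧
    HasPoly R (endCover fullMiddle outerFull m) (polyW m) ∧
      HasPoly R (endCover outerFull fullMiddle m) (X * polyW m)

section IsDomain

variable [IsDomain R]

lemma hasPoly_outerFull_fullMiddle_add_four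
    (hp : HasPoly R (endCover outerOuter fullMiddle (m + 4)) p)
    (hq : HasPoly R (endCover fullMiddle outerFull (m + 2)) q)
    (hr : HasPoly R (endCover middleFull fullOuter (m + 1)) r)
    (ht : HasPoly R (endCover fullOuter middleFull (m + 3)) t)
    (h : X ^ 2 * t = X ^ 6 * r + X * p) :
    HasPoly R (endCover outerFull fullMiddle (m + 4)) (X ^ 4 * q + X * p) := by
  rw [endCover_add]
  exact hasPoly_gridCover_split_left (i := 16) (j := 16) (n := 2) (by norm_num) (by decide)
    (by norm_num) (by decide) (by decide) (by decide +kernel)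
    (hasPoly_gridCover_of_endCover hp (by decide +kernel) (by decide))
    (hasPoly_gridCover_of_endCover_shift 4 .leaf hq (by decide +kernel) (by decide))
    (hasPoly_gridCover_of_endCover_shift 6 .leaf hr (by decide +kernel) (by decide))
    (hasPoly_gridCover_of_endCover ht (by decide +kernel) (by decide))
    h

lemma hasPoly_fullOuter_middleFull_add_five
    (hp : HasPoly R (endCover outerOuter middleFull (m + 5)) p)
    (hq : HasPoly R (endCover middleFull fullOuter (m + 3)) q)
    (hr : HasPoly R (endCover fullMiddle outerFull (m + 1)) r)
    (ht : HasPoly R (endCover outerFull fullMiddle (m + 3)) t)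
    (h : X ^ 3 * t = X ^ 7 * r + X * p) :
    HasPoly R (endCover fullOuter middleFull (m + 5)) (X ^ 4 * q + X * p) := by
  rw [endCover_add]
  exact hasPoly_gridCover_split_left (i := 16) (j := 19) (n := 2) (by norm_num) (by decide)
    (by norm_num) (by decide) (by decide) (by decide +kernel)
    (hasPoly_gridCover_of_endCover hp (by decide +kernel) (by decide))
    (hasPoly_gridCover_of_endCover_shift 4 .leaf hq (by decide +kernel) (by decide))
    (hasPoly_gridCover_of_endCover_shift 7 .leaf hr (by decide +kernel) (by decide))
    (hasPoly_gridCover_of_endCover_shift 1 .leaf ht (by decide +kernel) (by decide))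
    (by rw [← mul_assoc, ← pow_add, h])

lemma hasPoly_fullMiddle_outerFull_add_four
    (hp : HasPoly R (endCover fullMiddle outerOuter (m + 4)) p)
    (hq : HasPoly R (endCover outerFull fullMiddle (m + 2)) q)
    (hr : HasPoly R (endCover fullOuter middleFull (m + 1)) r)
    (ht : HasPoly R (endCover middleFull fullOuter (m + 3)) t)
    (h : X ^ 2 * t = X ^ 4 * r + p) :
    HasPoly R (endCover fullMiddle outerFull (m + 4)) (X ^ 2 * q + p) := by
  rw [endCover_add, show X ^ 2 * q = X ^ 1 * (X ^ 1 * q) by ring]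
  exact hasPoly_gridCover_split_right (i := 16) (j := 16) (n := 1) (by norm_num) (by decide)
    (by norm_num) (by decide) (by decide) (by decide +kernel)
    (hasPoly_gridCover_of_endCover hp (by decide +kernel) (by decide))
    (hasPoly_gridCover_of_endCover_shift 1 .leaf hq (by decide +kernel) (by decide))
    (hasPoly_gridCover_of_endCover_shift 4 .leaf hr (by decide +kernel) (by decide))
    (h ▸ hasPoly_gridCover_of_endCover_shift 2 .leaf ht (by decide +kernel) (by decide))

lemma hasPoly_middleFull_fullOuter_add_five
    (hp : HasPoly R (endCover middleFull outerOuter (m + 5)) p)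
    (hq : HasPoly R (endCover fullOuter middleFull (m + 3)) q)
    (hr : HasPoly R (endCover outerFull fullMiddle (m + 1)) r)
    (ht : HasPoly R (endCover fullMiddle outerFull (m + 3)) t)
    (h : X ^ 3 * t = X ^ 5 * r + p) :
    HasPoly R (endCover middleFull fullOuter (m + 5)) (X ^ 2 * q + p) := by
  rw [endCover_add]
  exact hasPoly_gridCover_split_right (i := 19) (j := 16) (n := 2) (by norm_num) (by decide)
    (by norm_num) (by decide) (by decide) (by decide +kernel)
    (hasPoly_gridCover_of_endCover hp (by decide +kernel) (by decide))
    (hasPoly_gridCover_of_endCover hq (by decide +kernel) (by decide))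
    (hasPoly_gridCover_of_endCover_shift 5 .leaf hr (by decide +kernel) (by decide))
    (h ▸ hasPoly_gridCover_of_endCover_shift 3 .leaf ht (by decide +kernel) (by decide))

lemma hasPoly_full_full_add_three
    (hp : HasPoly R (endCover fullOuter middleFull (m + 3)) p)
    (hq : HasPoly R (endCover fullMiddle outerFull (m + 1)) q)
    (hr : HasPoly R (endCover outerOuter fullMiddle (m + 3)) r)
    (ht : HasPoly R (endCover outerFull fullMiddle (m + 3)) t)
    (h : X * t = X ^ 5 * q + X ^ 2 * r) :
    HasPoly R (endCover full full (m + 3)) (X ^ 5 * q + X * p) := by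
  have h' : X ^ 1 * t = X ^ 5 * q + X * (X ^ 1 * r) := by
    rw [pow_one, h]
    ring
  rw [endCover_add]
  exact hasPoly_gridCover_of_shrink (i := 13) (j := 12) (k := 14) (by norm_num) (by decide)
    (by decide) (by decide)
    (hasPoly_gridCover_of_endCover hp (by decide +kernel) (by decide))
    (hasPoly_gridCover_of_endCover_shift 5 .leaf hq (by decide +kernel) (by decide))
    (hasPoly_gridCover_of_endCover_shift 1 .leaf hr (by decide +kernel) (by decide))
    (h' ▸ hasPoly_gridCover_of_endCover_shift 1 .leaf ht (by decide +kernel) (by decide))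

lemma hasPoly_polyU_add_five (h₁ : HasSplitPolys R (m + 1)) (h₃ : HasSplitPolys R (m + 3)) :
    HasPoly R (endCover middleFull fullOuter (m + 5)) (polyU (m + 5)) ∧
      HasPoly R (endCover fullOuter middleFull (m + 5)) (X * polyU (m + 5)) := by
  have h := pow_mul_polyW_add_three m
  constructor
  · convert hasPoly_middleFull_fullOuter_add_five
      (hasPoly_fullMiddle_outerOuter_and_middleFull (m + 5)).2 h₃.1.2 h₁.2.2 h₃.2.1 ?_ using 1
    · rw [polyU]
      ring
    · rw [h]
      ring
  · convert hasPoly_fullOuter_middleFull_add_five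
      (hasPoly_outerOuter_fullMiddle_and_middleFull (m + 5)).2 h₃.1.1 h₁.2.1 h₃.2.2 ?_ using 1
    · rw [polyU]
      ring
    · rw [mul_left_comm, h]
      ring

lemma hasPoly_polyW_add_four (h₁ : HasSplitPolys R (m + 1)) (h₂ : HasSplitPolys R (m + 2))
    (h₃ : HasSplitPolys R (m + 3)) :
    HasPoly R (endCover fullMiddle outerFull (m + 4)) (polyW (m + 4)) ∧
      HasPoly R (endCover outerFull fullMiddle (m + 4)) (X * polyW (m + 4)) := by
  have h := pow_mul_polyU_add_three m
  constructor
  · convert hasPoly_fullMiddle_outerFull_add_four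
      (hasPoly_fullMiddle_outerOuter_and_middleFull (m + 4)).1 h₂.2.2 h₁.1.2 h₃.1.1 ?_ using 1
    · rw [polyW]
      ring
    · rw [h]
      ring
  · convert hasPoly_outerFull_fullMiddle_add_four
      (hasPoly_outerOuter_fullMiddle_and_middleFull (m + 4)).1 h₂.2.1 h₁.1.1 h₃.1.2 ?_ using 1
    · rw [polyW]
      ring
    · rw [mul_left_comm, h]
      ring

lemma hasSplitPolys (R : Type*) [CommRing R] [IsDomain R] (m : ℕ) : HasSplitPolys R m := by
  induction m using Nat.strong_induction_on with | _ m ih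
  constructor
  · rcases lt_or_ge m 5 with h | h
    · exact ⟨hasPoly_middleFull_fullOuter_of_lt h, hasPoly_fullOuter_middleFull_of_lt h⟩
    obtain ⟨m, rfl⟩ := Nat.exists_eq_add_of_le' h
    exact hasPoly_polyU_add_five (ih _ (by omega)) (ih _ (by omega))
  · rcases lt_or_ge m 4 with h | h
    · exact ⟨hasPoly_fullMiddle_outerFull_of_lt h, hasPoly_outerFull_fullMiddle_of_lt h⟩
    obtain ⟨m, rfl⟩ := Nat.exists_eq_add_of_le' h
    exact hasPoly_polyW_add_four (ih _ (by omega)) (ih _ (by omega)) (ih _ (by omega))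

lemma hasPoly_full_full_add_two (m : ℕ) :
    HasPoly R (endCover full full (m + 2)) (polyGrid m) := by
  cases m with
  | zero =>
    convert hasPoly_full_full_two (R := R) using 1
    norm_num [polyGrid, polyU, polyW]
    ring
  | succ m =>
    obtain ⟨⟨-, hU⟩, -, hW⟩ := hasSplitPolys R (m + 3)
    convert hasPoly_full_full_add_three hU (hasSplitPolys R (m + 1)).2.1
      (hasPoly_outerOuter_fullMiddle_and_middleFull (m + 3)).1 hW ?_ using 1
    · rw [polyGrid]
      ring
    · rw [polyW]
      ring

end IsDomain

end Recursion
section Transport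

variable {R V : Type} {W : Type*} [CommRing R] [DecidableEq V] {K : Cplx V} {L : LowerSet (Set W)}
  {φ : V → W}

variable (R) in
/-- The chain map induced by a map of vertices, from the ordered chains of `K` to the chains
on `W`. -/
noncomputable def push (K : Cplx V) (φ : V → W) (k : ℕ) :
    (Smpx K k →₀ R) →ₗ[R] Chain R W (k + 1) :=
  Finsupp.lmapDomain R R fun f => φ ∘ f.1

lemma push_injective (hφ : φ.Injective) (k : ℕ) : Function.Injective (push R K φ k) :=
  Finsupp.mapDomain_injective fun _ _ h => Subtype.ext (hφ.comp_left h)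

lemma range_push (hK : ∀ σ, K.faces σ ↔ φ '' σ ∈ L) (hL : ∀ s ∈ L, s ⊆ Set.range φ) (k : ℕ) :
    LinearMap.range (push R K φ k) = chains R L (k + 1) := by
  rw [LinearMap.range_eq_map, ← Finsupp.supported_univ, push, Finsupp.lmapDomain_supported, chains]
  congr 1
  ext g
  simp only [Set.image_univ, Set.mem_range, Set.mem_ofPred_eq]
  constructor
  · rintro ⟨f, rfl⟩
    have := (hK _).1 f.2
    rwa [Finset.coe_image, Finset.coe_univ, Set.image_univ, ← Set.range_comp] at this
  · intro hg
    choose f hf using fun j => hL _ hg (Set.mem_range_self j)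
    obtain rfl : φ ∘ f = g := funext hf
    refine ⟨⟨f, (hK _).2 ?_⟩, rfl⟩
    rwa [Finset.coe_image, Finset.coe_univ, Set.image_univ, ← Set.range_comp]

lemma boundary_push (k : ℕ) (c : Smpx K (k + 1) →₀ R) :
    boundary (k + 1) (push R K φ (k + 1) c) = push R K φ k (bdry K R k c) := by
  induction c using Finsupp.induction_linear with
  | zero => simp
  | add f g hf hg => simp [hf, hg]
  | single f a =>
    simp only [push, bdry, Finsupp.lmapDomain_apply, Finsupp.mapDomain_single, boundary_single,
      faceSum, Finsupp.linearCombination_single, Finsupp.mapDomain_smul,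
      Finsupp.mapDomain_finsetSum]
    rfl

variable (R W) in
/-- The chains on the empty simplex, which the augmented ordered complex indexes by `Unit`. -/
noncomputable def pushEmpty : (Unit →₀ R) ≃ₗ[R] Chain R W 0 :=
  Finsupp.domLCongr (Equiv.ofUnique Unit (Fin 0 → W))

lemma boundary_zero_push (c : Smpx K 0 →₀ R) :
    boundary 0 (push R K φ 0 c) = pushEmpty R W (aug K R c) := by
  induction c using Finsupp.induction_linear with
  | zero => simp
  | add f g hf hg => simp [hf, hg]
  | single f a =>
    simp [push, aug, faceSum, pushEmpty, Subsingleton.elim _ (default : Fin 0 → W)]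

lemma push_mem_kerBoundary_iff (hφ : φ.Injective) {k : ℕ} {c : Smpx K k →₀ R} :
    push R K φ k c ∈ kerBoundary R W (k + 1) ↔ c ∈ cyc K R k := by
  cases k with
  | zero => simp [cyc, kerBoundary, boundary_zero_push]
  | succ k =>
    simp only [cyc, kerBoundary, LinearMap.mem_ker, boundary_push]
    exact map_eq_zero_iff _ (push_injective hφ k)

lemma map_push_cyc (hφ : φ.Injective) (hK : ∀ σ, K.faces σ ↔ φ '' σ ∈ L)
    (hL : ∀ s ∈ L, s ⊆ Set.range φ) (k : ℕ) :
    (cyc K R k).map (push R K φ k) = cycles R L (k + 1) := by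
  rw [cycles, ← range_push hK hL, ← Submodule.map_comap_eq]
  congr 1
  exact Submodule.ext fun c => (push_mem_kerBoundary_iff hφ).symm

lemma push_mem_boundaries_iff (hφ : φ.Injective) (hK : ∀ σ, K.faces σ ↔ φ '' σ ∈ L)
    (hL : ∀ s ∈ L, s ⊆ Set.range φ) {k : ℕ} {c : Smpx K k →₀ R} :
    push R K φ k c ∈ boundaries R L (k + 1) ↔ c ∈ LinearMap.range (bdry K R k) := by
  rw [boundaries, ← range_push hK hL, ← LinearMap.range_comp]
  simp only [LinearMap.mem_range, LinearMap.comp_apply, boundary_push, (push_injective hφ k).eq_iff]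

/-- The cycles of `K` as cycles of its image under an embedding of the vertices. -/
noncomputable def cycEquiv (hφ : φ.Injective) (hK : ∀ σ, K.faces σ ↔ φ '' σ ∈ L)
    (hL : ∀ s ∈ L, s ⊆ Set.range φ) (k : ℕ) : cyc K R k ≃ₗ[R] cycles R L (k + 1) :=
  (Submodule.equivMapOfInjective _ (push_injective hφ k) _).trans
    (LinearEquiv.ofEq _ _ (map_push_cyc hφ hK hL k))

lemma ker_cls_comp_cycEquiv (hφ : φ.Injective) (hK : ∀ σ, K.faces σ ↔ φ '' σ ∈ L)
    (hL : ∀ s ∈ L, s ⊆ Set.range φ) (k : ℕ) :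
    LinearMap.ker (cls ∘ₗ (cycEquiv hφ hK hL k).toLinearMap) = bsub K R k :=
  Submodule.ext fun _ => cls_eq_zero.trans (push_mem_boundaries_iff hφ hK hL)

/-- Reduced homology of `K` is the homology of its image under an embedding of the vertices. -/
noncomputable def reducedHomologyEquiv (hφ : φ.Injective) (hK : ∀ σ, K.faces σ ↔ φ '' σ ∈ L)
    (hL : ∀ s ∈ L, s ⊆ Set.range φ) (k : ℕ) :
    reducedHomology K R (k : ℤ) ≃ₗ[R] Homol R L (k + 1) :=
  (Submodule.quotEquivOfEq _ _ (ker_cls_comp_cycEquiv hφ hK hL k).symm).trans <|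
    LinearMap.quotKerEquivOfSurjective _ <|
      (LinearMap.submoduleMap_surjective _ _).comp (cycEquiv hφ hK hL k).surjective

lemma subsingleton_reducedHomology_neg_one (hK : ∀ σ, K.faces σ ↔ φ '' σ ∈ L)
    (hL : ∀ s ∈ L, s ⊆ Set.range φ) (h : Subsingleton (Homol R L 0)) (h0 : ∅ ∈ L) :
    Subsingleton (reducedHomology K R (-1)) := by
  change Subsingleton ((Unit →₀ R) ⧸ LinearMap.range (aug K R))
  refine Submodule.Quotient.subsingleton_iff.2 (eq_top_iff.2 fun u _ => ?_)
  have hu : pushEmpty R W u ∈ cycles R L 0 :=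
    ⟨mem_chains.2 fun f _ => by rwa [Set.range_eq_empty f], trivial⟩
  obtain ⟨c, hc, hcu⟩ := cls_eq_zero.1 (Subsingleton.elim (cls ⟨_, hu⟩) 0)
  rw [← range_push hK hL] at hc
  obtain ⟨c, rfl⟩ := hc
  rw [boundary_zero_push] at hcu
  exact ⟨c, (pushEmpty R W).injective hcu⟩

end Transport

section DominanceComplex

/-- Subsets of the columns `1, …, n` of the grid whose complement is dominating. -/
def domCover (n : ℕ) : LowerSet (Set ℕ) :=
  cover gridRel {v | 3 ≤ v ∧ v < 3 * (n + 1)} {v | 3 ≤ v ∧ v < 3 * (n + 1)}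

lemma endCover_full_full (m : ℕ) : endCover full full m = domCover (m + 2) := by
  have : strip (m + 1) 63 = {v | 3 ≤ v ∧ v < 3 * (m + 2 + 1)} := by
    ext v
    rw [mem_strip]
    simp only [Set.mem_ofPred_eq]
    rw [show 63 = 2 ^ 6 - 1 from rfl, Nat.testBit_two_pow_sub_one, decide_eq_true_iff]
    omega
  rw [endCover, gridCover, domCover, ← this]
  rfl

lemma gridCover_one_column : gridCover 0 56 56 = domCover 1 := by
  have : strip 0 56 = {v | 3 ≤ v ∧ v < 3 * (1 + 1)} := by
    ext v
    rw [mem_strip, show 56 = (2 ^ 3 - 1) <<< 3 from rfl]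
    simp only [Set.mem_ofPred_eq, Nat.testBit_shiftLeft, Nat.testBit_two_pow_sub_one,
      Bool.and_eq_true, decide_eq_true_iff]
    omega
  rw [gridCover, domCover, ← this]

/-- The position in the grid of a vertex of `P_n × P_3`. Column `0` of the grid stays empty. -/
def gridPos {n : ℕ} (v : Fin n × Fin 3) : ℕ := 3 * (v.1 + 1) + v.2

lemma gridPos_injective (n : ℕ) : Function.Injective (gridPos (n := n)) := by
  rintro ⟨⟨a, ha⟩, ⟨b, hb⟩⟩ ⟨⟨c, hc⟩, ⟨d, hd⟩⟩ h
  simp only [gridPos] at h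
  simp only [Prod.mk.injEq, Fin.mk.injEq]
  omega

lemma range_gridPos (n : ℕ) :
    Set.range (gridPos (n := n)) = {v | 3 ≤ v ∧ v < 3 * (n + 1)} := by
  ext v
  simp only [Set.mem_range, Set.mem_ofPred_eq]
  constructor
  · rintro ⟨⟨⟨a, ha⟩, ⟨b, hb⟩⟩, rfl⟩
    simp only [gridPos]
    omega
  · rintro ⟨h₁, h₂⟩
    exact ⟨⟨⟨v / 3 - 1, by omega⟩, ⟨v % 3, by omega⟩⟩, by simp only [gridPos]; omega⟩

lemma gridRel_gridPos {n : ℕ} (v w : Fin n × Fin 3) :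
    gridRel (gridPos w) (gridPos v) ↔
      w = v ∨ ((SimpleGraph.pathGraph n).boxProd (SimpleGraph.pathGraph 3)).Adj w v := by
  obtain ⟨⟨a, ha⟩, ⟨b, hb⟩⟩ := v
  obtain ⟨⟨c, hc⟩, ⟨d, hd⟩⟩ := w
  simp only [gridRel, gridPos, SimpleGraph.boxProd_adj, SimpleGraph.pathGraph_adj,
    Prod.mk.injEq, Fin.mk.injEq]
  omega

/-- The dominance complex of `P_n × P_3`. -/
abbrev gridDomCpx (n : ℕ) : Cplx (Fin n × Fin 3) :=
  domCpx ((SimpleGraph.pathGraph n).boxProd (SimpleGraph.pathGraph 3))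

lemma faces_gridDomCpx_iff {n : ℕ} (σ : Finset (Fin n × Fin 3)) :
    (gridDomCpx n).faces σ ↔ gridPos '' (σ : Set (Fin n × Fin 3)) ∈ domCover n := by
  rw [domCover, ← range_gridPos, mem_cover]
  simp only [Set.image_subset_range, true_and, Set.forall_mem_range, Set.exists_range_iff,
    gridRel_gridPos, (gridPos_injective n).mem_set_image, Finset.mem_coe]
  exact forall_congr' fun v => exists_congr fun w => and_comm

lemma subset_range_gridPos {n : ℕ} {s : Set ℕ} (hs : s ∈ domCover n) :
    s ⊆ Set.range (gridPos (n := n)) := by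
  rw [range_gridPos]
  exact hs.1

lemma empty_mem_domCover (n : ℕ) : ∅ ∈ domCover n :=
  ⟨Set.empty_subset _, fun y hy => ⟨y, hy, Or.inl rfl, id⟩⟩

lemma HasPoly.nonempty_reducedHomology_equiv {R : Type} [CommRing R] [Nontrivial R] {n : ℕ}
    {p : ℕ[X]} (h : HasPoly R (domCover n) p) (h0 : p.coeff 0 = 0) (i : ℤ) :
    Nonempty (reducedHomology (gridDomCpx n) R i ≃ₗ[R] (Fin (p.coeff (i + 1).toNat) → R)) := by
  have no_class : IsEmpty (Fin (p.coeff 0)) := h0.symm ▸ Fin.isEmpty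
  match i with
  | Int.ofNat k =>
    obtain ⟨hfree, hfinite, hrank⟩ := h (k + 1)
    have e : reducedHomology (gridDomCpx n) R k ≃ₗ[R] Homol R (domCover n) (k + 1) :=
      reducedHomologyEquiv (gridPos_injective n) faces_gridDomCpx_iff
        (fun _ => subset_range_gridPos) k
    exact ⟨e.trans (Module.finBasisOfFinrankEq R _ hrank).equivFun⟩
  | Int.negSucc 0 =>
    have : Subsingleton (reducedHomology (gridDomCpx n) R (Int.negSucc 0)) :=
      subsingleton_reducedHomology_neg_one faces_gridDomCpx_iff
        (fun _ => subset_range_gridPos) (h.subsingleton h0) (empty_mem_domCover n)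
    have : IsEmpty (Fin (p.coeff (Int.negSucc 0 + 1).toNat)) := no_class
    exact ⟨LinearEquiv.ofSubsingleton _ _⟩
  | Int.negSucc (k + 1) =>
    have : Subsingleton (reducedHomology (gridDomCpx n) R (Int.negSucc (k + 1))) :=
      inferInstanceAs (Subsingleton PUnit)
    have : IsEmpty (Fin (p.coeff (Int.negSucc (k + 1) + 1).toNat)) := no_class
    exact ⟨LinearEquiv.ofSubsingleton _ _⟩

end DominanceComplex

section BettiNumbers

lemma polyU_add_six (m : ℕ) : polyU (m + 6) = X ^ ((5 * m + 1) / 3 + 11) +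
    X ^ (5 * m / 3 + 11) + X ^ ((5 * m + 2) / 3 + 10) + X ^ 9 * polyU m := by
  rw [polyU, polyU, polyU, show (5 * (m + 4 + 2) + 4) / 3 = (5 * m + 1) / 3 + 11 by omega,
    show (5 * (m + 2 + 2) + 4) / 3 = 5 * m / 3 + 8 by omega,
    show (5 * (m + 2) + 4) / 3 = (5 * m + 2) / 3 + 4 by omega]
  ring

lemma polyW_add_six (m : ℕ) : polyW (m + 6) = X ^ ((5 * m + 2) / 3 + 11) +
    X ^ ((5 * m + 1) / 3 + 11) + X ^ (5 * m / 3 + 11) + X ^ 9 * polyW m := by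
  rw [polyW, polyW, polyW, show (5 * (m + 4 + 2) + 5) / 3 = (5 * m + 2) / 3 + 11 by omega,
    show (5 * (m + 2 + 2) + 5) / 3 = (5 * m + 1) / 3 + 8 by omega,
    show (5 * (m + 2) + 5) / 3 = 5 * m / 3 + 5 by omega]
  ring

lemma polyGrid_add_six (m : ℕ) : polyGrid (m + 6) = X ^ 9 * polyGrid m +
    2 * (X ^ ((5 * m + 2) / 3 + 16) + X ^ ((5 * m + 1) / 3 + 16) + X ^ (5 * m / 3 + 16)) := by
  rw [polyGrid, show m + 6 + 2 = m + 2 + 6 by ring, polyU_add_six, polyW_add_six, polyGrid,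
    show (5 * (m + 2) + 1) / 3 = (5 * m + 2) / 3 + 3 by omega,
    show 5 * (m + 2) / 3 = (5 * m + 1) / 3 + 3 by omega,
    show (5 * (m + 2) + 2) / 3 = 5 * m / 3 + 4 by omega]
  ring

lemma polyGrid_six_mul_add (m r : ℕ) : polyGrid (6 * (m + 1) + r) = X ^ 9 * polyGrid (6 * m + r) +
    X ^ (10 * m) * (2 * (X ^ ((5 * r + 2) / 3 + 16) + X ^ ((5 * r + 1) / 3 + 16) +
      X ^ (5 * r / 3 + 16))) := by
  rw [show 6 * (m + 1) + r = 6 * m + r + 6 by ring, polyGrid_add_six,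
    show (5 * (6 * m + r) + 2) / 3 = 10 * m + (5 * r + 2) / 3 by omega,
    show (5 * (6 * m + r) + 1) / 3 = 10 * m + (5 * r + 1) / 3 by omega,
    show (5 * (6 * m + r)) / 3 = 10 * m + 5 * r / 3 by omega]
  ring

/-- The sequence `b, 6, …, 6, c` placed at the indices `9 * m + l, …, 10 * m + l + 1`. All Betti
numbers of the dominance complexes have this shape. -/
def betti (b c l m k : ℕ) : ℕ :=
  if k = 9 * m + l then b else if 9 * m + l < k ∧ k < 10 * m + l + 1 then 6
  else if k = 10 * m + l + 1 then c else 0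

/-- The factor `X ^ 9` moves the sequence of `betti` by nine places, and the new term, which starts
ten places further at each step, completes `c` to `6` and puts `c` after it. -/
lemma coeff_eq_betti {P : ℕ → ℕ[X]} {b c d l : ℕ} (hcd : c + d = 6)
    (zero : P 0 = C b * X ^ l + C c * X ^ (l + 1))
    (succ : ∀ m, P (m + 1) = X ^ 9 * P m +
      X ^ (10 * m) * (C c * X ^ (l + 11) + C d * X ^ (l + 10))) (m k : ℕ) :
    (P m).coeff k = betti b c l m k := by
  induction m generalizing k with
  | zero =>
    rw [zero, coeff_add, coeff_C_mul_X_pow, coeff_C_mul_X_pow]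
    simp only [betti]
    split_ifs <;> omega
  | succ m ih =>
    rw [succ, coeff_add, coeff_X_pow_mul', coeff_X_pow_mul', coeff_add, coeff_C_mul_X_pow,
      coeff_C_mul_X_pow, ih]
    simp only [betti]
    split_ifs <;> omega

lemma coeff_polyGrid {b c d l r : ℕ} (hcd : c + d = 6)
    (zero : polyGrid r = C b * X ^ l + C c * X ^ (l + 1))
    (succ : 2 * (X ^ ((5 * r + 2) / 3 + 16) + X ^ ((5 * r + 1) / 3 + 16) + X ^ (5 * r / 3 + 16)) =
      (C c * X ^ (l + 11) + C d * X ^ (l + 10) : ℕ[X])) (m k : ℕ) :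
    (polyGrid (6 * m + r)).coeff k = betti b c l m k :=
  coeff_eq_betti (P := fun m => polyGrid (6 * m + r)) hcd (by simpa using zero)
    (fun m => by rw [polyGrid_six_mul_add, succ]) m k

lemma coeff_polyGrid_six_mul (m k : ℕ) : (polyGrid (6 * m)).coeff k = betti 5 0 6 m k := by
  refine coeff_polyGrid (d := 6) (r := 0) rfl ?_ ?_ m k
  · norm_num [polyGrid, polyU, polyW]
    ring
  · norm_num
    ring

lemma coeff_polyGrid_six_mul_add_one (m k : ℕ) :
    (polyGrid (6 * m + 1)).coeff k = betti 1 4 7 m k := by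
  refine coeff_polyGrid (d := 2) rfl ?_ ?_ m k
  · norm_num [polyGrid, polyU, polyW]
    ring
  · norm_num
    ring

lemma coeff_polyGrid_six_mul_add_two (m k : ℕ) :
    (polyGrid (6 * m + 2)).coeff k = betti 5 2 9 m k := by
  refine coeff_polyGrid (d := 4) rfl ?_ ?_ m k
  · norm_num [polyGrid, polyU, polyW]
    ring
  · norm_num
    ring

lemma coeff_polyGrid_six_mul_add_four (m k : ℕ) :
    (polyGrid (6 * m + 4)).coeff k = betti 5 4 12 m k := by
  refine coeff_polyGrid (d := 2) rfl ?_ ?_ m k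
  · norm_num [polyGrid, polyU, polyW]
    ring
  · norm_num
    ring

/-- The Poincaré polynomial for `6 * m + 1` columns, which for `m = 0` is not a value
of `polyGrid`. -/
noncomputable def polyOne : ℕ → ℕ[X]
  | 0 => X
  | m + 1 => polyGrid (6 * m + 3)

/-- The Poincaré polynomial for `6 * m + 3` columns, which for `m = 0` is not a value
of `polyGrid`. -/
noncomputable def polyThree : ℕ → ℕ[X]
  | 0 => X ^ 4 + 2 * X ^ 5
  | m + 1 => polyGrid (6 * m + 5)

lemma coeff_polyOne (m k : ℕ) : (polyOne m).coeff k = betti 1 0 1 m k := by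
  refine coeff_eq_betti (d := 6) rfl (by simp [polyOne]) (fun m => ?_) m k
  rcases m with _ | m
  · norm_num [polyOne, polyGrid, polyU, polyW]
    ring
  · rw [polyOne, polyOne, polyGrid_six_mul_add]
    norm_num
    ring

lemma coeff_polyThree (m k : ℕ) : (polyThree m).coeff k = betti 1 2 4 m k := by
  refine coeff_eq_betti (d := 4) rfl (by simp [polyThree]) (fun m => ?_) m k
  rcases m with _ | m
  · norm_num [polyThree, polyGrid, polyU, polyW]
    ring
  · rw [polyThree, polyThree, polyGrid_six_mul_add]
    norm_num
    ring

variable {R : Type} [CommRing R]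

section DomCover

variable [IsDomain R]

lemma hasPoly_domCover_add_four (m : ℕ) : HasPoly R (domCover (m + 4)) (polyGrid m) :=
  endCover_full_full (m + 2) ▸ hasPoly_full_full_add_two m

lemma hasPoly_domCover_six_mul_add_one : ∀ m, HasPoly R (domCover (6 * m + 1)) (polyOne m)
  | 0 => gridCover_one_column ▸ hasPoly_one_column
  | m + 1 => hasPoly_domCover_add_four (6 * m + 3)

lemma hasPoly_domCover_two : HasPoly R (domCover 2) (3 * X ^ 3) :=
  endCover_full_full 0 ▸ hasPoly_full_full_zero

lemma hasPoly_domCover_six_mul_add_three : ∀ m, HasPoly R (domCover (6 * m + 3)) (polyThree m)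
  | 0 => endCover_full_full 1 ▸ hasPoly_full_full_one
  | m + 1 => hasPoly_domCover_add_four (6 * m + 5)

end DomCover

section Nontrivial

variable [Nontrivial R] {n b c l m : ℕ} {p : ℕ[X]} {B : Type*} [AddCommGroup B] [Module R B]

lemma HasPoly.nonempty_equiv_of_betti (h : HasPoly R (domCover n) p)
    (hp : ∀ k, p.coeff k = betti b c (l + 1) m k) {i : ℤ} {d : ℕ}
    (hd : betti b c (l + 1) m (i + 1).toNat = d) :
    Nonempty (reducedHomology (gridDomCpx n) R i ≃ₗ[R] (Fin d → R)) := by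
  have h0 : p.coeff 0 = 0 := by
    rw [hp]
    simp [betti]
  rw [← hd, ← hp]
  exact h.nonempty_reducedHomology_equiv h0 i

lemma HasPoly.subsingleton_of_betti (h : HasPoly R (domCover n) p)
    (hp : ∀ k, p.coeff k = betti b c (l + 1) m k) {i : ℤ}
    (hi : betti b c (l + 1) m (i + 1).toNat = 0) :
    Subsingleton (reducedHomology (gridDomCpx n) R i) :=
  (h.nonempty_equiv_of_betti hp hi).some.toEquiv.subsingleton

lemma HasPoly.reducedHomology_of_betti (h : HasPoly R (domCover n) p)
    (hp : ∀ k, p.coeff k = betti b c (l + 1) m k) (e : (Fin b → R) ≃ₗ[R] B) {lo hi : ℤ}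
    (hlo : lo = 9 * m + l) (hhi : hi = 10 * m + l + 1) (i : ℤ) :
    (i = hi → Nonempty (reducedHomology (gridDomCpx n) R i ≃ₗ[R] (Fin c → R))) ∧
    (lo < i ∧ i < hi → Nonempty (reducedHomology (gridDomCpx n) R i ≃ₗ[R] (Fin 6 → R))) ∧
    (i = lo → Nonempty (reducedHomology (gridDomCpx n) R i ≃ₗ[R] B)) ∧
    (i ≠ hi → ¬(lo < i ∧ i < hi) → i ≠ lo →
      Subsingleton (reducedHomology (gridDomCpx n) R i)) := by
  refine ⟨fun _ => h.nonempty_equiv_of_betti hp ?_, fun _ => h.nonempty_equiv_of_betti hp ?_,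
    fun _ => (h.nonempty_equiv_of_betti hp ?_).map (·.trans e),
    fun _ _ _ => h.subsingleton_of_betti hp ?_⟩ <;>
  · simp only [betti]
    split_ifs <;> omega

lemma HasPoly.reducedHomology_of_betti_zero (h : HasPoly R (domCover n) p)
    (hp : ∀ k, p.coeff k = betti b 0 (l + 1) m k) (e : (Fin b → R) ≃ₗ[R] B) {lo hi : ℤ}
    (hlo : lo = 9 * m + l) (hhi : hi = 10 * m + l) (i : ℤ) :
    (lo < i ∧ i ≤ hi → Nonempty (reducedHomology (gridDomCpx n) R i ≃ₗ[R] (Fin 6 → R))) ∧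
    (i = lo → Nonempty (reducedHomology (gridDomCpx n) R i ≃ₗ[R] B)) ∧
    (¬(lo < i ∧ i ≤ hi) → i ≠ lo → Subsingleton (reducedHomology (gridDomCpx n) R i)) := by
  refine ⟨fun _ => h.nonempty_equiv_of_betti hp ?_,
    fun _ => (h.nonempty_equiv_of_betti hp ?_).map (·.trans e),
    fun _ _ => h.subsingleton_of_betti hp ?_⟩ <;>
  · simp only [betti]
    split_ifs <;> omega

end Nontrivial

lemma reducedHomology_gridDomCpx_two [IsDomain R] (i : ℤ) :
    (i = 2 → Nonempty (reducedHomology (gridDomCpx 2) R i ≃ₗ[R] (Fin 3 → R))) ∧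
    (i ≠ 2 → Subsingleton (reducedHomology (gridDomCpx 2) R i)) := by
  have hp (k : ℕ) : (3 * X ^ 3 : ℕ[X]).coeff k = betti 3 0 3 0 k := by
    rw [← C_ofNat, coeff_C_mul_X_pow]
    simp only [betti]
    split_ifs <;> omega
  obtain ⟨-, bottom, rest⟩ := hasPoly_domCover_two.reducedHomology_of_betti_zero (R := R) hp
    (.refl R _) (lo := 2) (hi := 2) (by norm_num) (by norm_num) i
  exact ⟨bottom, fun h => rest (by omega) h⟩

end BettiNumbers

end GridDominance

open GridDominance in
theorem homology_dominance_PnP3_general (R : Type) [CommRing R] [IsDomain R] :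
    (∀ m : ℕ, 1 ≤ m → ∀ i : ℤ,
      (i = 10 * (m : ℤ) - 1 →
        Nonempty (reducedHomology (gridDomCpx (6 * m)) R i ≃ₗ[R] (Fin 2 → R))) ∧
      (9 * (m : ℤ) - 1 < i ∧ i < 10 * (m : ℤ) - 1 →
        Nonempty (reducedHomology (gridDomCpx (6 * m)) R i ≃ₗ[R] (Fin 6 → R))) ∧
      (i = 9 * (m : ℤ) - 1 →
        Nonempty (reducedHomology (gridDomCpx (6 * m)) R i ≃ₗ[R] (Fin 5 → R))) ∧
      (i ≠ 10 * (m : ℤ) - 1 → ¬(9 * (m : ℤ) - 1 < i ∧ i < 10 * (m : ℤ) - 1) →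
        i ≠ 9 * (m : ℤ) - 1 → Subsingleton (reducedHomology (gridDomCpx (6 * m)) R i))) ∧
    (∀ m : ℕ, ∀ i : ℤ,
      (9 * (m : ℤ) < i ∧ i ≤ 10 * (m : ℤ) →
        Nonempty (reducedHomology (gridDomCpx (6 * m + 1)) R i ≃ₗ[R] (Fin 6 → R))) ∧
      (i = 9 * (m : ℤ) → Nonempty (reducedHomology (gridDomCpx (6 * m + 1)) R i ≃ₗ[R] R)) ∧
      (¬(9 * (m : ℤ) < i ∧ i ≤ 10 * (m : ℤ)) → i ≠ 9 * (m : ℤ) →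
        Subsingleton (reducedHomology (gridDomCpx (6 * m + 1)) R i))) ∧
    (∀ m : ℕ, 1 ≤ m → ∀ i : ℤ,
      (i = 10 * (m : ℤ) + 2 →
        Nonempty (reducedHomology (gridDomCpx (6 * m + 2)) R i ≃ₗ[R] (Fin 4 → R))) ∧
      (9 * (m : ℤ) + 2 < i ∧ i < 10 * (m : ℤ) + 2 →
        Nonempty (reducedHomology (gridDomCpx (6 * m + 2)) R i ≃ₗ[R] (Fin 6 → R))) ∧
      (i = 9 * (m : ℤ) + 2 →
        Nonempty (reducedHomology (gridDomCpx (6 * m + 2)) R i ≃ₗ[R] (Fin 5 → R))) ∧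
      (i ≠ 10 * (m : ℤ) + 2 → ¬(9 * (m : ℤ) + 2 < i ∧ i < 10 * (m : ℤ) + 2) →
        i ≠ 9 * (m : ℤ) + 2 → Subsingleton (reducedHomology (gridDomCpx (6 * m + 2)) R i))) ∧
    (∀ i : ℤ,
      (i = 2 → Nonempty (reducedHomology (gridDomCpx 2) R i ≃ₗ[R] (Fin 3 → R))) ∧
      (i ≠ 2 → Subsingleton (reducedHomology (gridDomCpx 2) R i))) ∧
    (∀ m : ℕ, ∀ i : ℤ,
      (i = 10 * (m : ℤ) + 4 →
        Nonempty (reducedHomology (gridDomCpx (6 * m + 3)) R i ≃ₗ[R] (Fin 2 → R))) ∧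
      (9 * (m : ℤ) + 3 < i ∧ i < 10 * (m : ℤ) + 4 →
        Nonempty (reducedHomology (gridDomCpx (6 * m + 3)) R i ≃ₗ[R] (Fin 6 → R))) ∧
      (i = 9 * (m : ℤ) + 3 → Nonempty (reducedHomology (gridDomCpx (6 * m + 3)) R i ≃ₗ[R] R)) ∧
      (i ≠ 10 * (m : ℤ) + 4 → ¬(9 * (m : ℤ) + 3 < i ∧ i < 10 * (m : ℤ) + 4) →
        i ≠ 9 * (m : ℤ) + 3 → Subsingleton (reducedHomology (gridDomCpx (6 * m + 3)) R i))) ∧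
    (∀ m : ℕ, ∀ i : ℤ,
      (9 * (m : ℤ) + 5 < i ∧ i ≤ 10 * (m : ℤ) + 5 →
        Nonempty (reducedHomology (gridDomCpx (6 * m + 4)) R i ≃ₗ[R] (Fin 6 → R))) ∧
      (i = 9 * (m : ℤ) + 5 →
        Nonempty (reducedHomology (gridDomCpx (6 * m + 4)) R i ≃ₗ[R] (Fin 5 → R))) ∧
      (¬(9 * (m : ℤ) + 5 < i ∧ i ≤ 10 * (m : ℤ) + 5) → i ≠ 9 * (m : ℤ) + 5 →
        Subsingleton (reducedHomology (gridDomCpx (6 * m + 4)) R i))) ∧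
    (∀ m : ℕ, ∀ i : ℤ,
      (i = 10 * (m : ℤ) + 7 →
        Nonempty (reducedHomology (gridDomCpx (6 * m + 5)) R i ≃ₗ[R] (Fin 4 → R))) ∧
      (9 * (m : ℤ) + 6 < i ∧ i < 10 * (m : ℤ) + 7 →
        Nonempty (reducedHomology (gridDomCpx (6 * m + 5)) R i ≃ₗ[R] (Fin 6 → R))) ∧
      (i = 9 * (m : ℤ) + 6 → Nonempty (reducedHomology (gridDomCpx (6 * m + 5)) R i ≃ₗ[R] R)) ∧
      (i ≠ 10 * (m : ℤ) + 7 → ¬(9 * (m : ℤ) + 6 < i ∧ i < 10 * (m : ℤ) + 7) →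
        i ≠ 9 * (m : ℤ) + 6 → Subsingleton (reducedHomology (gridDomCpx (6 * m + 5)) R i))) := by
  refine ⟨fun m hm i => ?_, fun m => ?_, fun m hm i => ?_, reducedHomology_gridDomCpx_two,
    fun m => ?_, fun m => ?_, fun m => ?_⟩
  · obtain ⟨m, rfl⟩ := Nat.exists_eq_add_of_le' hm
    exact (hasPoly_domCover_add_four (6 * m + 2)).reducedHomology_of_betti (l := 8)
      (coeff_polyGrid_six_mul_add_two m) (.refl R _) (by push_cast; ring) (by push_cast; ring) i
  · exact (hasPoly_domCover_six_mul_add_one m).reducedHomology_of_betti_zero (l := 0)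
      (coeff_polyOne m) (.funUnique (Fin 1) R R) (by simp) (by simp)
  · obtain ⟨m, rfl⟩ := Nat.exists_eq_add_of_le' hm
    exact (hasPoly_domCover_add_four (6 * m + 4)).reducedHomology_of_betti (l := 11)
      (coeff_polyGrid_six_mul_add_four m) (.refl R _) (by push_cast; ring) (by push_cast; ring) i
  · exact (hasPoly_domCover_six_mul_add_three m).reducedHomology_of_betti (l := 3)
      (coeff_polyThree m) (.funUnique (Fin 1) R R) (by simp) (by push_cast; ring)
  · exact (hasPoly_domCover_add_four (6 * m)).reducedHomology_of_betti_zero (l := 5)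
      (coeff_polyGrid_six_mul m) (.refl R _) (by simp) (by simp)
  · exact (hasPoly_domCover_add_four (6 * m + 1)).reducedHomology_of_betti (l := 6)
      (coeff_polyGrid_six_mul_add_one m) (.funUnique (Fin 1) R R) (by simp) (by push_cast; ring)

/-- Theorem 6.12: the reduced integral homology groups of `D(P_n × P_3)`. -/
theorem homology_dominance_PnP3 :
    (∀ m : ℕ, 1 ≤ m → ∀ i : ℤ,
      (i = 10 * (m : ℤ) - 1 → Nonempty (Hdp (6 * m) i ≃ₗ[ℤ] (Fin 2 → ℤ))) ∧
      (9 * (m : ℤ) - 1 < i ∧ i < 10 * (m : ℤ) - 1 →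
        Nonempty (Hdp (6 * m) i ≃ₗ[ℤ] (Fin 6 → ℤ))) ∧
      (i = 9 * (m : ℤ) - 1 → Nonempty (Hdp (6 * m) i ≃ₗ[ℤ] (Fin 5 → ℤ))) ∧
      (i ≠ 10 * (m : ℤ) - 1 → ¬(9 * (m : ℤ) - 1 < i ∧ i < 10 * (m : ℤ) - 1) →
        i ≠ 9 * (m : ℤ) - 1 → Subsingleton (Hdp (6 * m) i))) ∧
    (∀ m : ℕ, ∀ i : ℤ,
      (9 * (m : ℤ) < i ∧ i ≤ 10 * (m : ℤ) →
        Nonempty (Hdp (6 * m + 1) i ≃ₗ[ℤ] (Fin 6 → ℤ))) ∧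
      (i = 9 * (m : ℤ) → Nonempty (Hdp (6 * m + 1) i ≃ₗ[ℤ] ℤ)) ∧
      (¬(9 * (m : ℤ) < i ∧ i ≤ 10 * (m : ℤ)) → i ≠ 9 * (m : ℤ) →
        Subsingleton (Hdp (6 * m + 1) i))) ∧
    (∀ m : ℕ, 1 ≤ m → ∀ i : ℤ,
      (i = 10 * (m : ℤ) + 2 → Nonempty (Hdp (6 * m + 2) i ≃ₗ[ℤ] (Fin 4 → ℤ))) ∧
      (9 * (m : ℤ) + 2 < i ∧ i < 10 * (m : ℤ) + 2 →
        Nonempty (Hdp (6 * m + 2) i ≃ₗ[ℤ] (Fin 6 → ℤ))) ∧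
      (i = 9 * (m : ℤ) + 2 → Nonempty (Hdp (6 * m + 2) i ≃ₗ[ℤ] (Fin 5 → ℤ))) ∧
      (i ≠ 10 * (m : ℤ) + 2 → ¬(9 * (m : ℤ) + 2 < i ∧ i < 10 * (m : ℤ) + 2) →
        i ≠ 9 * (m : ℤ) + 2 → Subsingleton (Hdp (6 * m + 2) i))) ∧
    (∀ i : ℤ,
      (i = 2 → Nonempty (Hdp 2 i ≃ₗ[ℤ] (Fin 3 → ℤ))) ∧
      (i ≠ 2 → Subsingleton (Hdp 2 i))) ∧
    (∀ m : ℕ, ∀ i : ℤ,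
      (i = 10 * (m : ℤ) + 4 → Nonempty (Hdp (6 * m + 3) i ≃ₗ[ℤ] (Fin 2 → ℤ))) ∧
      (9 * (m : ℤ) + 3 < i ∧ i < 10 * (m : ℤ) + 4 →
        Nonempty (Hdp (6 * m + 3) i ≃ₗ[ℤ] (Fin 6 → ℤ))) ∧
      (i = 9 * (m : ℤ) + 3 → Nonempty (Hdp (6 * m + 3) i ≃ₗ[ℤ] ℤ)) ∧
      (i ≠ 10 * (m : ℤ) + 4 → ¬(9 * (m : ℤ) + 3 < i ∧ i < 10 * (m : ℤ) + 4) →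
        i ≠ 9 * (m : ℤ) + 3 → Subsingleton (Hdp (6 * m + 3) i))) ∧
    (∀ m : ℕ, ∀ i : ℤ,
      (9 * (m : ℤ) + 5 < i ∧ i ≤ 10 * (m : ℤ) + 5 →
        Nonempty (Hdp (6 * m + 4) i ≃ₗ[ℤ] (Fin 6 → ℤ))) ∧
      (i = 9 * (m : ℤ) + 5 → Nonempty (Hdp (6 * m + 4) i ≃ₗ[ℤ] (Fin 5 → ℤ))) ∧
      (¬(9 * (m : ℤ) + 5 < i ∧ i ≤ 10 * (m : ℤ) + 5) → i ≠ 9 * (m : ℤ) + 5 →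
        Subsingleton (Hdp (6 * m + 4) i))) ∧
    (∀ m : ℕ, ∀ i : ℤ,
      (i = 10 * (m : ℤ) + 7 → Nonempty (Hdp (6 * m + 5) i ≃ₗ[ℤ] (Fin 4 → ℤ))) ∧
      (9 * (m : ℤ) + 6 < i ∧ i < 10 * (m : ℤ) + 7 →
        Nonempty (Hdp (6 * m + 5) i ≃ₗ[ℤ] (Fin 6 → ℤ))) ∧
      (i = 9 * (m : ℤ) + 6 → Nonempty (Hdp (6 * m + 5) i ≃ₗ[ℤ] ℤ)) ∧
      (i ≠ 10 * (m : ℤ) + 7 → ¬(9 * (m : ℤ) + 6 < i ∧ i < 10 * (m : ℤ) + 7) →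
        i ≠ 9 * (m : ℤ) + 6 → Subsingleton (Hdp (6 * m + 5) i))) :=
  homology_dominance_PnP3_general ℤ
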